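/- Let Ω ⊂ ℝⁿ, n ≥ 3, be a bounded domain and let Γ_n = {x₀} ⊂ ∂Ω be a point such that B_{δ₀}(x₀) \ {x₀} ⊂ Ω for some small δ₀ > 0. Assume α_n = −(n−2)/2, 2 < q ≤ 2n/(n−2), and set β_n = −(n−2)/2 − 1 + n(q−2)/(2q). Then for every δ > 0 there exists C = C(Ω, δ, n) > 0 such that for all v ∈ C₀^∞(Ω): ∫_{Γ_n^δ} d_n^{2−n} ( |∇v|² + v² ) dx ≥ C ( ∫_{Γ_n^δ} d_n^{β_n q} X(d_n/D_n)^{q/2 + 1} |v|^q dx )^{2/q}. -/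

import Mathlib

/-!
Since `βₙ q = -n`, both sides are almost invariant under dilations about `x₀`, which is moved to
the origin.  The punctured ball of radius `R = min δ D` is cut into the dyadic shells
`R / 2 ^ (k + 1) ≤ |x| < R / 2 ^ k`, and each shell is rescaled to `1/2 ≤ |y| < 1`; on the `k`-th
one `X` is at most `2 / (k + 1)`.  Let `m k`, `w k` and `I k` be the rescaled `L²` mass, the weighted
energy and the rescaled `L^q` mass of the `k`-th shell, and let `W` be the total weighted energy.

* Sobolev's inequality (`sobolev_annulus`) gives
  `I k ≤ (C (m k + m (k+1) + w k + 4 w (k+1))) ^ (q/2)`.  It follows from the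
  Gagliardo–Nirenberg–Sobolev inequality for compactly supported functions applied to a cut-off
  `C¹` extension across the unit sphere (`extendC1`); the inner boundary is harmless because the
  next shell is available.
* Comparing `v` at `y` and `y / 2` along rays (`shellMass_half_le`) gives
  `m (k+1) ≤ (1 + ε) m k + (1 + 1/ε) C (w k + 4 w (k+1))`.  With `ε = 1 / (2 (k+1))` the quantity
  `m k / (k + 1)` telescopes (`discrete_hardy`), so that both `sup m k / (k+1)` and
  `∑ m k / (k+1)²` are at most `C W`; the term `v²` in the energy is needed only for `m 0 ≤ C W`.
* Hence, with `p = q / 2`, one has `∑ (k+1)^(-p-1) I k ≤ C W ^ p` (`discrete_bliss`): in `t ^ p`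
  the factor `t ^ (p-1)` is estimated by the supremum and the remaining `t` by the sum.

The resulting estimate on a ball is `weighted_sobolev_ball`.  It carries over to `Ω` because a test
function vanishes near `x₀` and outside `Ω`, and because `Ω` lies in the open ball of radius `D`
(`dist_lt_sSup`), where `1 - log (|x - x₀| / D)` is at least `1`.
-/

open MeasureTheory Metric Set Real Filter

noncomputable section

/-- Euclidean space `ℝⁿ`. -/
abbrev Euc (n : ℕ) := EuclideanSpace ℝ (Fin n)

/-- Smooth functions compactly supported in `Ω`. -/
def IsTest {n : ℕ} (Ω : Set (Euc n)) (u : Euc n → ℝ) : Prop :=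
  ContDiff ℝ (⊤ : ℕ∞) u ∧ HasCompactSupport u ∧ tsupport u ⊆ Ω

/-- `S` is a boundaryless `C²` submanifold of `ℝⁿ` of codimension `k`, described locally
as a regular level set of a `C²` submersion. -/
def IsC2Submanifold {n : ℕ} (k : ℕ) (S : Set (Euc n)) : Prop :=
  ∀ p ∈ S, ∃ (U : Set (Euc n)) (f : Euc n → EuclideanSpace ℝ (Fin k)),
    IsOpen U ∧ p ∈ U ∧ ContDiff ℝ 2 f ∧
    (∀ x ∈ U, Function.Surjective (fderiv ℝ f x)) ∧
    S ∩ U = {x ∈ U | f x = 0}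

open scoped ENNReal NNReal

/-! ### Annuli and changes of variables -/

/-- The half-open annulus `{a ≤ |y| < b}` centred at the origin. -/
def annulus (n : ℕ) (a b : ℝ) : Set (Euc n) := {y | a ≤ ‖y‖ ∧ ‖y‖ < b}

lemma measurableSet_annulus (n : ℕ) (a b : ℝ) : MeasurableSet (annulus n a b) :=
  (measurableSet_le measurable_const measurable_norm).inter
    (measurableSet_lt measurable_norm measurable_const)

/-- The inverse of `g` being `2`-Lipschitz, the bound follows from the behaviour of the Hausdorff
measure under Lipschitz maps. -/
lemma volume_inter_preimage_le {n : ℕ} {A : Set (Euc n)} {g : Euc n → Euc n}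
    (hg : ∀ x ∈ A, ∀ y ∈ A, ‖x - y‖ ≤ 2 * ‖g x - g y‖) (B : Set (Euc n)) :
    volume (A ∩ g ⁻¹' B) ≤ 2 ^ n * volume B := by
  have hinj : InjOn g A := by
    intro x hx y hy hxy
    have := hg x hx y hy
    rw [hxy, sub_self, norm_zero, mul_zero] at this
    exact sub_eq_zero.1 (norm_le_zero_iff.1 this)
  have hleft : LeftInvOn (Function.invFunOn g A) g A := hinj.leftInvOn_invFunOn
  have hlip : LipschitzOnWith 2 (Function.invFunOn g A) (g '' (A ∩ g ⁻¹' B)) := by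
    apply LipschitzOnWith.of_dist_le_mul
    rintro _ ⟨x, ⟨hx, -⟩, rfl⟩ _ ⟨y, ⟨hy, -⟩, rfl⟩
    rw [hleft hx, hleft hy, dist_eq_norm, dist_eq_norm]
    simpa using hg x hx y hy
  have himg : Function.invFunOn g A '' (g '' (A ∩ g ⁻¹' B)) = A ∩ g ⁻¹' B :=
    (hleft.mono inter_subset_left).image_image
  have h1 := hlip.hausdorffMeasure_image_le (d := (n : ℝ)) (Nat.cast_nonneg n)
  rw [himg] at h1
  have h2 : (Measure.hausdorffMeasure (n : ℝ) : Measure (Euc n)) (A ∩ g ⁻¹' B)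
      ≤ 2 ^ n * (Measure.hausdorffMeasure (n : ℝ) : Measure (Euc n)) B := by
    refine h1.trans ?_
    have : ((2 : ℝ≥0) : ℝ≥0∞) ^ (n : ℝ) = 2 ^ n := by simp
    rw [this]
    gcongr
    rintro _ ⟨x, ⟨-, hx⟩, rfl⟩
    exact hx
  have hv := Measure.isAddLeftInvariant_eq_smul (volume : Measure (Euc n))
    (Measure.hausdorffMeasure (n : ℝ))
  rw [hv, Measure.smul_apply, Measure.smul_apply, ENNReal.smul_def, ENNReal.smul_def,
    smul_eq_mul, smul_eq_mul, mul_left_comm]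
  gcongr

/-- A map whose inverse is `2`-Lipschitz distorts integrals by at most `2 ^ n`. -/
lemma lintegral_comp_le_of_antilipschitz {n : ℕ} {A B : Set (Euc n)} {g : Euc n → Euc n}
    (hg : ∀ x ∈ A, ∀ y ∈ A, ‖x - y‖ ≤ 2 * ‖g x - g y‖) (hgm : Measurable g)
    (hAB : MapsTo g A B) {f : Euc n → ℝ≥0∞} (hf : Measurable f) :
    ∫⁻ x in A, f (g x) ≤ 2 ^ n * ∫⁻ x in B, f x := by
  have hle : Measure.map g (volume.restrict A) ≤ (2 ^ n : ℝ≥0∞) • volume.restrict B := by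
    refine Measure.le_iff.2 fun s hs => ?_
    rw [Measure.map_apply hgm hs, Measure.restrict_apply (hgm hs), Measure.smul_apply,
      Measure.restrict_apply hs, smul_eq_mul]
    refine le_trans (measure_mono ?_) (volume_inter_preimage_le hg (s ∩ B))
    rintro x ⟨hx, hxA⟩
    exact ⟨hxA, hx, hAB hxA⟩
  rw [← lintegral_map hf hgm]
  refine (lintegral_mono' hle le_rfl).trans ?_
  rw [lintegral_smul_measure, smul_eq_mul]

/-- Change of variables under dilations. -/
lemma lintegral_comp_smul {n : ℕ} {r : ℝ} (hr : 0 < r) {f : Euc n → ℝ≥0∞} (hf : Measurable f) :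
    ∫⁻ x, f (r • x) = ENNReal.ofReal (r⁻¹ ^ n) * ∫⁻ x, f x := by
  have := lintegral_map (μ := (volume : Measure (Euc n))) hf (measurable_const_smul r)
  rw [← this, Measure.map_addHaar_smul _ hr.ne', lintegral_smul_measure, smul_eq_mul]
  simp [abs_of_pos hr]

lemma setLIntegral_comp_smul {n : ℕ} {r : ℝ} (hr : 0 < r) {f : Euc n → ℝ≥0∞}
    (hf : Measurable f) {A : Set (Euc n)} (hA : MeasurableSet A) :
    ∫⁻ x in (fun x => r • x) ⁻¹' A, f (r • x) = ENNReal.ofReal (r⁻¹ ^ n) * ∫⁻ x in A, f x := by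
  rw [← lintegral_indicator hA, ← lintegral_comp_smul hr (hf.indicator hA),
    ← lintegral_indicator (measurable_const_smul r hA)]
  rfl

lemma preimage_smul_annulus {n : ℕ} {r : ℝ} (hr : 0 < r) (a b : ℝ) :
    (fun x : Euc n => r • x) ⁻¹' annulus n (r * a) (r * b) = annulus n a b := by
  ext x
  simp [annulus, norm_smul, abs_of_pos hr, hr]

/-- The polynomial fold `x ↦ (1 + c - c|x|²) x`.  It fixes the unit sphere and, for
`c ≥ 1`, reflects the points just outside the sphere to its inside. -/
def fold {n : ℕ} (c : ℝ) (x : Euc n) : Euc n := (1 + c - c * ‖x‖ ^ 2) • x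

lemma contDiff_fold {n : ℕ} (c : ℝ) : ContDiff ℝ 1 (fold (n := n) c) := by
  unfold fold
  have : ContDiff ℝ 1 (fun x : Euc n => ‖x‖ ^ 2) := contDiff_norm_sq ℝ
  fun_prop

lemma hasFDerivAt_fold {n : ℕ} (c : ℝ) (x : Euc n) :
    HasFDerivAt (fold c) ((1 + c - c * ‖x‖ ^ 2) • ContinuousLinearMap.id ℝ (Euc n)
      + (-(c * 2) • innerSL ℝ x).smulRight x) x := by
  have h1 : HasFDerivAt (fun x : Euc n => ‖x‖ ^ 2) (2 • innerSL ℝ x) x :=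
    (hasStrictFDerivAt_norm_sq x).hasFDerivAt
  have h2 := ((h1.const_mul c).const_sub (1 + c)).smul (hasFDerivAt_id x)
  refine h2.congr_fderiv ?_
  ext y
  simp only [id]
  simp
  ring_nf
  simp

/-- The collar `1 < |x| ≤ 1.1` is folded into the shell `1/4 ≤ |x| < 1`. -/
lemma fold_mapsTo {n : ℕ} {c : ℝ} (hc : 1 ≤ c) (hc2 : c ≤ 2) :
    MapsTo (fold (n := n) c) {x | 1 < ‖x‖ ∧ ‖x‖ ≤ 1.1} (annulus n (1/4) 1) := by
  rintro x ⟨h1, h2⟩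
  have hsq : ‖x‖ ^ 2 ≤ 1.21 := by nlinarith
  have hpos : (0.58 : ℝ) ≤ 1 + c - c * ‖x‖ ^ 2 := by nlinarith
  simp only [annulus, fold, mem_ofPred_eq, norm_smul, Real.norm_eq_abs]
  rw [abs_of_pos (by linarith)]
  constructor
  · nlinarith
  · have : 0 < (‖x‖ - 1) * (c * (‖x‖ ^ 2 + ‖x‖) - 1) := by
      apply mul_pos (by linarith); nlinarith
    nlinarith

/-- On the collar the fold has a `2`-Lipschitz inverse; the angular and radial parts of
`|x - y|²` are compared separately. -/
lemma fold_antilipschitz {n : ℕ} {c : ℝ} (hc : 1 ≤ c) (hc2 : c ≤ 2) :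
    ∀ x ∈ {x : Euc n | 1 < ‖x‖ ∧ ‖x‖ ≤ 1.1}, ∀ y ∈ {x : Euc n | 1 < ‖x‖ ∧ ‖x‖ ≤ 1.1},
      ‖x - y‖ ≤ 2 * ‖fold c x - fold c y‖ := by
  rintro x ⟨hx1, hx2⟩ y ⟨hy1, hy2⟩
  rw [← pow_le_pow_iff_left₀ (by positivity) (by positivity) two_ne_zero]
  rw [mul_pow, fold, fold, norm_sub_sq_real, norm_sub_sq_real, norm_smul, norm_smul,
    real_inner_smul_left, real_inner_smul_right, mul_pow, mul_pow, Real.norm_eq_abs,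
    Real.norm_eq_abs, sq_abs, sq_abs]
  have hin := real_inner_le_norm x y
  set a := ‖x‖
  set b := ‖y‖
  set i := inner ℝ x y
  have ha : a ^ 2 ≤ 1.21 := by nlinarith
  have hb : b ^ 2 ≤ 1.21 := by nlinarith
  have hp : (0.58 : ℝ) ≤ 1 + c - c * a ^ 2 := by nlinarith
  have hq : (0.58 : ℝ) ≤ 1 + c - c * b ^ 2 := by nlinarith
  have hpq : (0.58 : ℝ) * 0.58 ≤ (1 + c - c * a ^ 2) * (1 + c - c * b ^ 2) := by gcongr
  -- the angular part
  have e1 : (a * b - i) ≤ 4 * ((1 + c - c * a ^ 2) * (1 + c - c * b ^ 2) * (a * b - i)) := by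
    nlinarith
  -- the radial part
  have e2 : (a - b) ^ 2 ≤ ((1 + c - c * a ^ 2) * a - (1 + c - c * b ^ 2) * b) ^ 2 := by
    have : (1 + c - c * a ^ 2) * a - (1 + c - c * b ^ 2) * b
      = -(a - b) * (c * (a ^ 2 + a * b + b ^ 2) - 1 - c) := by ring
    rw [this, mul_pow, neg_sq]
    have h3 : 3 ≤ a ^ 2 + a * b + b ^ 2 := by nlinarith
    have : 1 ≤ c * (a ^ 2 + a * b + b ^ 2) - 1 - c := by nlinarith
    have : 1 ≤ (c * (a ^ 2 + a * b + b ^ 2) - 1 - c) ^ 2 := by nlinarith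
    nlinarith [sq_nonneg (a - b)]
  nlinarith [sq_nonneg (a - b)]

/-! ### A `C¹` reflection across the unit sphere -/

/-- The energy density `|Du|² + u²`. -/
def energy {n : ℕ} (u : Euc n → ℝ) (x : Euc n) : ℝ := ‖fderiv ℝ u x‖ ^ 2 + u x ^ 2

lemma energy_nonneg {n : ℕ} (u : Euc n → ℝ) (x : Euc n) : 0 ≤ energy u x := by
  unfold energy; positivity

lemma continuous_energy {n : ℕ} {u : Euc n → ℝ} (hu : ContDiff ℝ 1 u) :
    Continuous (energy u) := by
  unfold energy
  have h1 := hu.continuous_fderiv one_ne_zero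
  have h2 := hu.continuous
  fun_prop

/-- The reflected function used outside of the unit ball.  The weights `2, -1` and the
folds `1, 2` are matched so that values and first derivatives agree with those of `u` on the
unit sphere. -/
def reflected {n : ℕ} (u : Euc n → ℝ) (x : Euc n) : ℝ := 2 * u (fold 1 x) - u (fold 2 x)

/-- A `C¹` extension of `u` from the closed unit ball to the whole space. -/
def extendC1 {n : ℕ} (u : Euc n → ℝ) (x : Euc n) : ℝ :=
  if ‖x‖ ≤ 1 then u x else reflected u x

lemma hasFDerivAt_reflected {n : ℕ} {u : Euc n → ℝ} (hu : ContDiff ℝ 1 u) (x : Euc n) :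
    HasFDerivAt (reflected u)
      ((2 : ℝ) • (fderiv ℝ u (fold 1 x)).comp (fderiv ℝ (fold 1) x)
        - (fderiv ℝ u (fold 2 x)).comp (fderiv ℝ (fold 2) x)) x := by
  have h (c : ℝ) : HasFDerivAt (fun x => u (fold c x))
      ((fderiv ℝ u (fold c x)).comp (fderiv ℝ (fold c) x)) x :=
    (hu.differentiable one_ne_zero _).hasFDerivAt.comp x
      ((contDiff_fold c).differentiable one_ne_zero x).hasFDerivAt
  exact ((h 1).const_mul 2).sub (h 2)

lemma fold_of_norm_eq_one {n : ℕ} (c : ℝ) {x : Euc n} (hx : ‖x‖ = 1) : fold c x = x := by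
  simp [fold, hx]

lemma fderiv_reflected_of_norm_eq_one {n : ℕ} {u : Euc n → ℝ} (hu : ContDiff ℝ 1 u)
    {x : Euc n} (hx : ‖x‖ = 1) : fderiv ℝ (reflected u) x = fderiv ℝ u x := by
  rw [(hasFDerivAt_reflected hu x).fderiv, (hasFDerivAt_fold 1 x).fderiv,
    (hasFDerivAt_fold 2 x).fderiv, fold_of_norm_eq_one 1 hx, fold_of_norm_eq_one 2 hx]
  ext y
  simp [hx]
  ring

lemma contDiff_reflected {n : ℕ} {u : Euc n → ℝ} (hu : ContDiff ℝ 1 u) :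
    ContDiff ℝ 1 (reflected u) := by
  unfold reflected
  have h1 := hu.comp (contDiff_fold 1)
  have h2 := hu.comp (contDiff_fold 2)
  exact (contDiff_const.mul h1).sub h2

lemma extend_eqOn {n : ℕ} (u : Euc n → ℝ) : EqOn (extendC1 u) (reflected u) {x | 1 ≤ ‖x‖} := by
  intro x hx
  by_cases h : ‖x‖ ≤ 1
  · have : ‖x‖ = 1 := le_antisymm h hx
    simp only [extendC1, h, if_true, reflected, fold_of_norm_eq_one _ this]
    ring
  · simp [extendC1, h]

lemma hasFDerivAt_extendC1 {n : ℕ} {u : Euc n → ℝ} (hu : ContDiff ℝ 1 u) (x : Euc n) :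
    HasFDerivAt (extendC1 u)
      (if ‖x‖ ≤ 1 then fderiv ℝ u x else fderiv ℝ (reflected u) x) x := by
  have hin : ‖x‖ ≤ 1 → HasFDerivWithinAt (extendC1 u) (fderiv ℝ u x) {x | ‖x‖ ≤ 1} x := by
    intro hx
    refine (hu.differentiable one_ne_zero x).hasFDerivAt.hasFDerivWithinAt.congr ?_ ?_
    · intro y hy
      exact if_pos hy
    · exact if_pos hx
  have hout : 1 ≤ ‖x‖ →
      HasFDerivWithinAt (extendC1 u) (fderiv ℝ (reflected u) x) {x | 1 ≤ ‖x‖} x := by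
    intro hx
    refine ((contDiff_reflected hu).differentiable one_ne_zero
      x).hasFDerivAt.hasFDerivWithinAt.congr (extend_eqOn u) (extend_eqOn u hx)
  rcases lt_trichotomy ‖x‖ 1 with h | h | h
  · rw [if_pos h.le]
    exact (hin h.le).hasFDerivAt (mem_of_superset
      ((isOpen_lt continuous_norm continuous_const).mem_nhds h)
        fun y (hy : ‖y‖ < 1) => (hy.le : ‖y‖ ≤ 1))
  · rw [if_pos h.le]
    have := (hin h.le).union ((fderiv_reflected_of_norm_eq_one hu h) ▸ hout h.ge)
    refine this.hasFDerivAt ?_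
    convert univ_mem using 1
    ext y
    simp [le_total]
  · rw [if_neg h.not_ge]
    exact (hout h.le).hasFDerivAt (mem_of_superset
      ((isOpen_lt continuous_const continuous_norm).mem_nhds h)
        fun y (hy : 1 < ‖y‖) => (hy.le : 1 ≤ ‖y‖))

lemma contDiff_extendC1 {n : ℕ} {u : Euc n → ℝ} (hu : ContDiff ℝ 1 u) :
    ContDiff ℝ 1 (extendC1 u) := by
  rw [contDiff_one_iff_hasFDerivAt]
  refine ⟨_, ?_, hasFDerivAt_extendC1 hu⟩
  refine Continuous.if_le (hu.continuous_fderiv one_ne_zero)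
    ((contDiff_reflected hu).continuous_fderiv one_ne_zero) continuous_norm continuous_const ?_
  intro x hx
  exact (fderiv_reflected_of_norm_eq_one hu hx).symm

lemma norm_fderiv_fold_le {n : ℕ} {c : ℝ} (hc : 1 ≤ c) (hc2 : c ≤ 2) {x : Euc n}
    (hx : 1 < ‖x‖ ∧ ‖x‖ ≤ 1.1) : ‖fderiv ℝ (fold c) x‖ ≤ 6 := by
  rw [(hasFDerivAt_fold c x).fderiv]
  obtain ⟨h1, h2⟩ := hx
  have hsq : ‖x‖ ^ 2 ≤ 1.21 := by nlinarith
  have hpos : (0.58 : ℝ) ≤ 1 + c - c * ‖x‖ ^ 2 := by nlinarith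
  refine (norm_add_le _ _).trans ?_
  rw [ContinuousLinearMap.norm_smulRight_apply, norm_smul, norm_smul, innerSL_apply_norm,
    norm_neg, Real.norm_eq_abs, Real.norm_eq_abs, abs_of_pos (by linarith),
    abs_of_pos (by linarith)]
  have : ‖ContinuousLinearMap.id ℝ (Euc n)‖ ≤ 1 := ContinuousLinearMap.norm_id_le
  nlinarith

lemma energy_extend_of_lt {n : ℕ} {u : Euc n → ℝ} (hu : ContDiff ℝ 1 u) {x : Euc n}
    (hx : ‖x‖ < 1) : energy (extendC1 u) x = energy u x := by
  rw [energy, (hasFDerivAt_extendC1 hu x).fderiv, if_pos hx.le, extendC1, if_pos hx.le, energy]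

lemma energy_extend_le {n : ℕ} {u : Euc n → ℝ} (hu : ContDiff ℝ 1 u) {x : Euc n}
    (hx : 1 < ‖x‖ ∧ ‖x‖ ≤ 1.1) :
    energy (extendC1 u) x ≤ 360 * (energy u (fold 1 x) + energy u (fold 2 x)) := by
  rw [energy, (hasFDerivAt_extendC1 hu x).fderiv, if_neg hx.1.not_ge, extendC1, if_neg hx.1.not_ge,
    (hasFDerivAt_reflected hu x).fderiv, reflected, energy, energy]
  have h1 := norm_fderiv_fold_le (n := n) (c := 1) (by norm_num) (by norm_num) hx
  have h2 := norm_fderiv_fold_le (n := n) (c := 2) (by norm_num) (by norm_num) hx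
  have key : ‖(2 : ℝ) • (fderiv ℝ u (fold 1 x)).comp (fderiv ℝ (fold 1) x)
        - (fderiv ℝ u (fold 2 x)).comp (fderiv ℝ (fold 2) x)‖
      ≤ 12 * ‖fderiv ℝ u (fold 1 x)‖ + 6 * ‖fderiv ℝ u (fold 2 x)‖ := by
    refine (norm_sub_le _ _).trans ?_
    rw [norm_smul, Real.norm_eq_abs, abs_of_pos (by norm_num : (0 : ℝ) < 2)]
    have e1 := ContinuousLinearMap.opNorm_comp_le (fderiv ℝ u (fold 1 x)) (fderiv ℝ (fold 1) x)
    have e2 := ContinuousLinearMap.opNorm_comp_le (fderiv ℝ u (fold 2 x)) (fderiv ℝ (fold 2) x)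
    have e3 := mul_le_mul_of_nonneg_left h1 (norm_nonneg (fderiv ℝ u (fold 1 x)))
    have e4 := mul_le_mul_of_nonneg_left h2 (norm_nonneg (fderiv ℝ u (fold 2 x)))
    linarith
  have key2 := pow_le_pow_left₀ (norm_nonneg _) key 2
  nlinarith [sq_nonneg (‖fderiv ℝ u (fold 1 x)‖ - 2 * ‖fderiv ℝ u (fold 2 x)‖),
    sq_nonneg (u (fold 1 x) + 2 * u (fold 2 x)), sq_nonneg (u (fold 1 x)),
    sq_nonneg (u (fold 2 x)), sq_nonneg ‖fderiv ℝ u (fold 1 x)‖,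
    sq_nonneg ‖fderiv ℝ u (fold 2 x)‖]

/-! ### Sobolev's inequality on a shell -/

/-- A cutoff equal to `1` on `1/2 ≤ |x| < 1` and vanishing off `1/4 ≤ |x| ≤ 1.1`, obtained as a
difference of two bump functions. -/
lemma exists_cutoff (n : ℕ) : ∃ (χ : Euc n → ℝ) (K : ℝ), 0 < K ∧ ContDiff ℝ 1 χ ∧
    (∀ x ∈ annulus n (1/2) 1, χ x = 1) ∧
    (∀ x, (‖x‖ < 1/4 ∨ 1.1 < ‖x‖) → χ x = 0 ∧ fderiv ℝ χ x = 0) ∧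
    ∀ x, |χ x| ≤ K ∧ ‖fderiv ℝ χ x‖ ≤ K := by
  let f : ContDiffBump (0 : Euc n) := ⟨1, 1.1, by norm_num, by norm_num⟩
  let g : ContDiffBump (0 : Euc n) := ⟨1/4, 1/2, by norm_num, by norm_num⟩
  let χ : Euc n → ℝ := fun x => f x - g x
  have hC : ContDiff ℝ 1 χ := f.contDiff.sub g.contDiff
  have hcs : HasCompactSupport χ := f.hasCompactSupport.sub g.hasCompactSupport
  have h0 : ∀ x, (‖x‖ < 1/4 ∨ 1.1 < ‖x‖) → χ x = 0 := by
    rintro x (h | h)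
    · have e1 : f x = 1 := f.one_of_mem_closedBall (by simp [f]; linarith)
      have e2 : g x = 1 := g.one_of_mem_closedBall (by simp [g]; linarith)
      simp [χ, e1, e2]
    · have e1 : f x = 0 := f.zero_of_le_dist (by simp [f]; norm_num at h; linarith)
      have e2 : g x = 0 := g.zero_of_le_dist (by simp [g]; norm_num at h; linarith)
      simp [χ, e1, e2]
  have hopen : IsOpen {x : Euc n | ‖x‖ < 1/4 ∨ 1.1 < ‖x‖} :=
    (isOpen_lt continuous_norm continuous_const).union
      (isOpen_lt continuous_const continuous_norm)
  obtain ⟨K₁, hK₁⟩ := hcs.exists_bound_of_continuous hC.continuous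
  obtain ⟨K₂, hK₂⟩ := (hcs.fderiv (𝕜 := ℝ)).exists_bound_of_continuous
    (hC.continuous_fderiv one_ne_zero)
  refine ⟨χ, max 1 (max K₁ K₂), by positivity, hC, ?_, ?_, ?_⟩
  · rintro x ⟨h1, h2⟩
    have e1 : f x = 1 := f.one_of_mem_closedBall (by simp [f]; linarith)
    have e2 : g x = 0 := g.zero_of_le_dist (by simp [g]; linarith)
    simp [χ, e1, e2]
  · intro x hx
    refine ⟨h0 x hx, ?_⟩
    have : χ =ᶠ[nhds x] fun _ => 0 := by
      filter_upwards [hopen.mem_nhds hx] with y hy using h0 y hy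
    rw [this.fderiv_eq]
    simp
  · intro x
    exact ⟨(hK₁ x).trans (by simp), (hK₂ x).trans (by simp)⟩

/-- The function `w` is the reflected extension of `u` times the cutoff; its Dirichlet energy is
controlled by the energy of `u` on `1/4 ≤ |x| < 1`. -/
lemma exists_extension (n : ℕ) (hn : 3 ≤ n) : ∃ C : ℝ, 0 < C ∧ ∀ u : Euc n → ℝ, ContDiff ℝ 1 u →
    ∃ w : Euc n → ℝ, ContDiff ℝ 1 w ∧ EqOn w u (annulus n (1/2) 1) ∧
      w.support ⊆ closedBall 0 1.1 ∧
      ∫⁻ x, ENNReal.ofReal (‖fderiv ℝ w x‖ ^ 2)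
        ≤ ENNReal.ofReal C * ∫⁻ x in annulus n (1/4) 1, ENNReal.ofReal (energy u x) := by
  have : Nonempty (Fin n) := ⟨⟨0, by omega⟩⟩
  obtain ⟨χ, K, hK, hχ, hχ1, hχ0, hχK⟩ := exists_cutoff n
  refine ⟨2 * K ^ 2 * (1 + 720 * 2 ^ n), by positivity, fun u hu => ?_⟩
  have hF := contDiff_extendC1 hu
  have hw : ContDiff ℝ 1 (fun x => χ x * extendC1 u x) := hχ.mul hF
  refine ⟨fun x => χ x * extendC1 u x, hw, ?_, ?_, ?_⟩
  · intro x hx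
    simp only [hχ1 x hx, one_mul]
    exact if_pos hx.2.le
  · intro x hx
    simp only [mem_closedBall, dist_zero_right]
    by_contra h
    exact hx (by simp [(hχ0 x (Or.inr (not_le.1 h))).1])
  set D : Euc n → ℝ := fun x => ‖fderiv ℝ (fun x => χ x * extendC1 u x) x‖ ^ 2 with hD
  have hder (x : Euc n) : fderiv ℝ (fun x => χ x * extendC1 u x) x
      = χ x • fderiv ℝ (extendC1 u) x + extendC1 u x • fderiv ℝ χ x :=
    fderiv_fun_mul (hχ.differentiable one_ne_zero x) (hF.differentiable one_ne_zero x)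
  have hD0 : ∀ x, (‖x‖ < 1/4 ∨ 1.1 < ‖x‖) → D x = 0 := by
    intro x hx
    simp [hD, hder, hχ0 x hx]
  have hDle : ∀ x, D x ≤ 2 * K ^ 2 * energy (extendC1 u) x := by
    intro x
    simp only [hD, hder, energy]
    have e1 : ‖χ x • fderiv ℝ (extendC1 u) x + extendC1 u x • fderiv ℝ χ x‖
        ≤ K * (‖fderiv ℝ (extendC1 u) x‖ + |extendC1 u x|) := by
      refine (norm_add_le _ _).trans ?_
      rw [norm_smul, norm_smul, Real.norm_eq_abs, Real.norm_eq_abs]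
      have := mul_le_mul_of_nonneg_right (hχK x).1 (norm_nonneg (fderiv ℝ (extendC1 u) x))
      have := mul_le_mul_of_nonneg_left (hχK x).2 (abs_nonneg (extendC1 u x))
      linarith
    have e2 := pow_le_pow_left₀ (norm_nonneg _) e1 2
    have e3 : (‖fderiv ℝ (extendC1 u) x‖ + |extendC1 u x|) ^ 2
        ≤ 2 * (‖fderiv ℝ (extendC1 u) x‖ ^ 2 + extendC1 u x ^ 2) := by
      rw [← sq_abs (extendC1 u x)]
      nlinarith [sq_nonneg (‖fderiv ℝ (extendC1 u) x‖ - |extendC1 u x|)]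
    rw [mul_pow] at e2
    have := mul_le_mul_of_nonneg_left e3 (sq_nonneg K)
    linarith
  set A := annulus n (1/4) 1
  set O : Set (Euc n) := {x | 1 < ‖x‖ ∧ ‖x‖ ≤ 1.1} with hO
  have hOm : MeasurableSet O := (measurableSet_lt measurable_const measurable_norm).inter
    (measurableSet_le measurable_norm measurable_const)
  have hem : Measurable fun x => ENNReal.ofReal (energy u x) :=
    (continuous_energy hu).measurable.ennreal_ofReal
  have hcover : ∫⁻ x, ENNReal.ofReal (D x) ≤ (∫⁻ x in A, ENNReal.ofReal (D x))
      + (∫⁻ x in sphere (0 : Euc n) 1, ENNReal.ofReal (D x)) + ∫⁻ x in O, ENNReal.ofReal (D x) := by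
    have hsub : Function.support (fun x => ENNReal.ofReal (D x)) ⊆ (A ∪ sphere 0 1) ∪ O := by
      intro x hx
      have h' : ¬ (‖x‖ < 1/4 ∨ 1.1 < ‖x‖) := fun h => hx (by simp [hD0 x h])
      push Not at h'
      rcases lt_trichotomy ‖x‖ 1 with h | h | h
      · exact Or.inl (Or.inl ⟨h'.1, h⟩)
      · exact Or.inl (Or.inr (by simpa using h))
      · exact Or.inr ⟨h, h'.2⟩
    rw [← setLIntegral_eq_of_support_subset hsub]
    refine (lintegral_union_le _ _ _).trans ?_
    gcongr
    exact lintegral_union_le _ _ _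
  have hS : ∫⁻ x in sphere (0 : Euc n) 1, ENNReal.ofReal (D x) = 0 := by
    rw [Measure.restrict_eq_zero.2 (Measure.addHaar_sphere _ _ _)]
    simp
  have hin : ∫⁻ x in A, ENNReal.ofReal (D x)
      ≤ ENNReal.ofReal (2 * K ^ 2) * ∫⁻ x in A, ENNReal.ofReal (energy u x) := by
    rw [← lintegral_const_mul _ hem]
    refine setLIntegral_mono (hem.const_mul _) fun x hx => ?_
    rw [← ENNReal.ofReal_mul (by positivity), ← energy_extend_of_lt hu hx.2]
    exact ENNReal.ofReal_le_ofReal (hDle x)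
  have hfold (c : ℝ) (hc : 1 ≤ c) (hc2 : c ≤ 2) :
      ∫⁻ x in O, ENNReal.ofReal (energy u (fold c x))
        ≤ 2 ^ n * ∫⁻ x in A, ENNReal.ofReal (energy u x) :=
    lintegral_comp_le_of_antilipschitz (fold_antilipschitz hc hc2)
      (contDiff_fold c).continuous.measurable (fold_mapsTo hc hc2) hem
  have hout : ∫⁻ x in O, ENNReal.ofReal (D x)
      ≤ ENNReal.ofReal (2 * K ^ 2 * 360) *
        (2 ^ n * (∫⁻ x in A, ENNReal.ofReal (energy u x))
          + 2 ^ n * ∫⁻ x in A, ENNReal.ofReal (energy u x)) := by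
    have hm (c : ℝ) : Measurable fun x => ENNReal.ofReal (energy u (fold c x)) :=
      hem.comp (contDiff_fold c).continuous.measurable
    have hm12 : Measurable fun x =>
        ENNReal.ofReal (energy u (fold 1 x)) + ENNReal.ofReal (energy u (fold 2 x)) :=
      (hm 1).add (hm 2)
    refine le_trans ?_ (mul_le_mul_right (add_le_add (hfold 1 le_rfl (by norm_num))
      (hfold 2 (by norm_num) le_rfl)) _)
    rw [← lintegral_add_left (hm 1), ← lintegral_const_mul _ hm12]
    refine setLIntegral_mono (hm12.const_mul _) fun x hx => ?_
    rw [← ENNReal.ofReal_add (energy_nonneg _ _) (energy_nonneg _ _),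
      ← ENNReal.ofReal_mul (by positivity)]
    refine ENNReal.ofReal_le_ofReal ((hDle x).trans ?_)
    rw [mul_assoc (2 * K ^ 2)]
    exact mul_le_mul_of_nonneg_left (energy_extend_le hu hx) (by positivity)
  refine hcover.trans ?_
  rw [hS, add_zero]
  refine (add_le_add hin hout).trans (le_of_eq ?_)
  have h2 : (2 ^ n : ℝ≥0∞) = ENNReal.ofReal (2 ^ n) := by
    rw [ENNReal.ofReal_pow (by norm_num)]; simp
  generalize (∫⁻ x in A, ENNReal.ofReal (energy u x)) = J
  rw [← two_mul, h2, ← mul_assoc, ← mul_assoc, ← add_mul,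
    show (2 : ℝ≥0∞) = ENNReal.ofReal 2 by simp, ← ENNReal.ofReal_mul (by positivity),
    ← ENNReal.ofReal_mul (by positivity), ← ENNReal.ofReal_add (by positivity) (by positivity)]
  congr 2
  ring

/-- Sobolev's inequality on the annulus `1/2 ≤ |x| < 1`, up to its outer boundary. -/
lemma sobolev_annulus (n : ℕ) (hn : 3 ≤ n) {q : ℝ} (hq : 2 < q)
    (hqn : q ≤ 2 * (n : ℝ) / ((n : ℝ) - 2)) :
    ∃ C : ℝ, 0 < C ∧ ∀ u : Euc n → ℝ, ContDiff ℝ 1 u →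
      ∫⁻ x in annulus n (1/2) 1, ENNReal.ofReal (|u x| ^ q)
        ≤ (ENNReal.ofReal C *
          ∫⁻ x in annulus n (1/4) 1, ENNReal.ofReal (energy u x)) ^ (q / 2) := by
  obtain ⟨C₁, hC₁, hext⟩ := exists_extension n hn
  have hn' : (3 : ℝ) ≤ n := by exact_mod_cast hn
  have hq0 : 0 < q := by linarith
  set c : ℝ≥0 := eLpNormLESNormFDerivOfLeConst ℝ (volume : Measure (Euc n)) (closedBall 0 1.1)
    2 q.toNNReal
  refine ⟨((c : ℝ) ^ 2 + 1) * C₁, by positivity, fun u hu => ?_⟩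
  obtain ⟨w, hw, hwu, hsupp, hen⟩ := hext u hu
  have hsob := eLpNorm_le_eLpNorm_fderiv_of_le (volume : Measure (Euc n)) hw hsupp
    (p := 2) (q := q.toNNReal) (by norm_num)
    (by simp only [finrank_euclideanSpace, Fintype.card_fin]; exact_mod_cast (by omega : 2 < n))
    (by
      rw [Real.coe_toNNReal _ hq0.le]
      simp only [finrank_euclideanSpace, Fintype.card_fin]
      rw [le_div_iff₀ (by linarith)] at hqn
      rw [NNReal.coe_inv, NNReal.coe_ofNat, inv_eq_one_div, inv_eq_one_div, inv_eq_one_div,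
        div_sub_div _ _ (by norm_num) (by positivity), div_le_div_iff₀ (by positivity) hq0]
      nlinarith) isBounded_closedBall
  change _ ≤ (c : ℝ≥0∞) * _ at hsob
  clear_value c
  have hqc : ((q.toNNReal : ℝ≥0) : ℝ) = q := Real.coe_toNNReal _ hq0.le
  rw [eLpNorm_nnreal_eq_lintegral (by simpa using hq0), hqc,
    eLpNorm_nnreal_eq_lintegral (by norm_num)] at hsob
  have hE : ∫⁻ x, ‖fderiv ℝ w x‖ₑ ^ (((2 : ℝ≥0) : ℝ)) = ∫⁻ x, ENNReal.ofReal (‖fderiv ℝ w x‖ ^ 2) := by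
    refine lintegral_congr fun x => ?_
    rw [ENNReal.ofReal_pow (norm_nonneg _), ofReal_norm]
    simp
  rw [hE] at hsob
  have hL : ∫⁻ x in annulus n (1/2) 1, ENNReal.ofReal (|u x| ^ q) ≤ ∫⁻ x, ‖w x‖ₑ ^ q := by
    refine le_trans ?_ (setLIntegral_le_lintegral (annulus n (1/2) 1) _)
    refine (setLIntegral_congr_fun (measurableSet_annulus _ _ _) fun x hx => ?_).le
    simp only [hwu hx]
    rw [← ENNReal.ofReal_rpow_of_nonneg (abs_nonneg _) hq0.le, ← Real.norm_eq_abs,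
      ofReal_norm]
  refine hL.trans ?_
  have h1 := ENNReal.rpow_le_rpow hsob hq0.le
  rw [← ENNReal.rpow_mul, one_div_mul_cancel hq0.ne', ENNReal.rpow_one] at h1
  refine h1.trans ?_
  rw [show q = 2 * (q / 2) by ring, ENNReal.rpow_mul, show 2 * (q / 2) / 2 = q / 2 by ring]
  refine ENNReal.rpow_le_rpow ?_ (by positivity)
  rw [ENNReal.mul_rpow_of_nonneg _ _ (by norm_num), ← ENNReal.rpow_mul,
    ENNReal.ofReal_mul (by positivity), mul_assoc]
  have : (1 / ((2 : ℝ≥0) : ℝ)) * 2 = 1 := by norm_num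
  rw [this, ENNReal.rpow_one]
  refine mul_le_mul' ?_ hen
  rw [ENNReal.rpow_ofNat, ← ENNReal.ofReal_coe_nnreal, ← ENNReal.ofReal_pow (by positivity)]
  exact ENNReal.ofReal_le_ofReal (by linarith)

/-! ### Summing the shell inequalities: the discrete part -/

/-- Discrete Hardy inequality: `m K / (K + 1)` telescopes, which controls the growth of `m` and a
weighted sum of its terms at once. -/
lemma discrete_hardy {m w : ℕ → ℝ} (hstep : ∀ k : ℕ,
      m (k + 1) ≤ (1 + 1 / (2 * ((k : ℝ) + 1))) * m k + (1 + 2 * ((k : ℝ) + 1)) * w k)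
    (hw : ∀ k, 0 ≤ w k) (K : ℕ) :
    m K / ((K : ℝ) + 1) + ∑ k ∈ Finset.range K, m k / (2 * ((k : ℝ) + 1) * ((k : ℝ) + 2))
      ≤ m 0 + 2 * ∑ k ∈ Finset.range K, w k := by
  induction K with
  | zero => simp
  | succ K ih =>
    rw [Finset.sum_range_succ, Finset.sum_range_succ]
    have hK : (0 : ℝ) ≤ K := Nat.cast_nonneg K
    have key : m (K + 1) / ((K : ℝ) + 1 + 1) + m K / (2 * ((K : ℝ) + 1) * ((K : ℝ) + 2))
        ≤ m K / ((K : ℝ) + 1) + 2 * w K := by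
      have h1 : m (K + 1) / ((K : ℝ) + 1 + 1) ≤ ((1 + 1 / (2 * ((K : ℝ) + 1))) * m K
          + (1 + 2 * ((K : ℝ) + 1)) * w K) / ((K : ℝ) + 1 + 1) := by
        gcongr
        exact hstep K
      have h2 : ((1 + 1 / (2 * ((K : ℝ) + 1))) * m K
          + (1 + 2 * ((K : ℝ) + 1)) * w K) / ((K : ℝ) + 1 + 1)
          = m K / ((K : ℝ) + 1) - m K / (2 * ((K : ℝ) + 1) * ((K : ℝ) + 2))
            + (2 - 1 / ((K : ℝ) + 2)) * w K := by
        field_simp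
        ring
      have h3 : (2 - 1 / ((K : ℝ) + 2)) * w K ≤ 2 * w K := by
        have : 0 ≤ 1 / ((K : ℝ) + 2) := by positivity
        nlinarith [hw K]
      linarith
    push_cast
    linarith

/-- Summation of the shell estimates.  The quantities `m k`, `w k`, `I k` stand for the `L²`
mass, the energy and the `L^q` mass on the `k`-th dyadic shell, rescaled to unit size. -/
lemma discrete_bliss {p C₀ C₁ C₂ : ℝ} (hp : 1 < p) (hC₀ : 1 ≤ C₀) (hC₁ : 0 < C₁) (hC₂ : 0 ≤ C₂)
    {W : ℝ} (hW : 0 ≤ W) {m w I : ℕ → ℝ} (hm : ∀ k, 0 ≤ m k) (hw : ∀ k, 0 ≤ w k)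
    (hstep : ∀ k : ℕ, m (k + 1) ≤ (1 + 1 / (2 * ((k : ℝ) + 1))) * m k
      + (1 + 2 * ((k : ℝ) + 1)) * (C₀ * (w k + 4 * w (k + 1))))
    (hI : ∀ k, I k ≤ (C₁ * (m k + m (k + 1) + w k + 4 * w (k + 1))) ^ p)
    (hm0 : m 0 ≤ C₂ * W) (hsum : ∀ K, ∑ k ∈ Finset.range K, w k ≤ W) (K : ℕ) :
    ∑ k ∈ Finset.range K, ((k : ℝ) + 1) ^ (-(p + 1)) * I k
      ≤ 17 * (C₁ * (4 * (C₂ + 10 * C₀))) ^ p * W ^ p := by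
  set B := (C₂ + 10 * C₀) * W with hB
  have hB0 : 0 ≤ B := by positivity
  have hsum' : ∀ K, ∑ k ∈ Finset.range K, (w k + 4 * w (k + 1)) ≤ 5 * W := by
    intro K
    rw [Finset.sum_add_distrib, ← Finset.mul_sum]
    have h1 := hsum (K + 1)
    rw [Finset.sum_range_succ'] at h1
    linarith [hsum K, hw 0]
  have h5W : 5 * W ≤ B := by nlinarith
  have hH : ∀ K : ℕ, m K / ((K : ℝ) + 1)
      + ∑ k ∈ Finset.range K, m k / (2 * ((k : ℝ) + 1) * ((k : ℝ) + 2)) ≤ B := by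
    intro K
    have := discrete_hardy hstep
      (fun k => mul_nonneg (by linarith) (by linarith [hw k, hw (k + 1)])) K
    rw [← Finset.mul_sum] at this
    have h3 := mul_le_mul_of_nonneg_left (hsum' K) (by linarith : 0 ≤ C₀)
    rw [hB]
    nlinarith
  have hterm (k : ℕ) : 0 ≤ m k / (2 * ((k : ℝ) + 1) * ((k : ℝ) + 2)) :=
    div_nonneg (hm k) (by positivity)
  have hS : ∀ K : ℕ, ∑ k ∈ Finset.range K, m k / (2 * ((k : ℝ) + 1) * ((k : ℝ) + 2)) ≤ B := by
    intro K
    have : 0 ≤ m K / ((K : ℝ) + 1) := div_nonneg (hm K) (by positivity)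
    linarith [hH K]
  have hmk : ∀ k : ℕ, m k ≤ B * ((k : ℝ) + 1) := by
    intro k
    rw [← div_le_iff₀ (by positivity)]
    have := Finset.sum_nonneg fun j (_ : j ∈ Finset.range k) => hterm j
    linarith [hH k]
  set t : ℕ → ℝ := fun k => m k + m (k + 1) + w k + 4 * w (k + 1) with ht
  have ht0 : ∀ k, 0 ≤ t k := fun k => by
    simp only [ht]; linarith [hm k, hm (k + 1), hw k, hw (k + 1)]
  have hwk : ∀ k, w k + 4 * w (k + 1) ≤ B := by
    intro k
    refine le_trans ?_ ((hsum' (k + 1)).trans h5W)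
    exact Finset.single_le_sum (f := fun k => w k + 4 * w (k + 1))
      (fun j _ => by linarith [hw j, hw (j + 1)]) (Finset.self_mem_range_succ k)
  have htk : ∀ k : ℕ, t k ≤ 4 * B * ((k : ℝ) + 1) := by
    intro k
    have h1 := hmk k
    have h2 := hmk (k + 1)
    have h3 := hwk k
    push_cast at h2
    have hk : (0 : ℝ) ≤ k := Nat.cast_nonneg k
    have : 0 ≤ B * k := by positivity
    simp only [ht]
    nlinarith
  have hbound : ∀ k : ℕ, ((k : ℝ) + 1) ^ (-(p + 1)) * I k
      ≤ C₁ ^ p * (4 * B) ^ (p - 1) * (t k / ((k : ℝ) + 1) ^ 2) := by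
    intro k
    have hk : (0 : ℝ) < (k : ℝ) + 1 := by positivity
    have e1 : I k ≤ C₁ ^ p * (t k * ((4 * B) ^ (p - 1) * ((k : ℝ) + 1) ^ (p - 1))) := by
      refine (hI k).trans ?_
      rw [Real.mul_rpow hC₁.le (ht0 k), ← Real.mul_rpow (by positivity) hk.le]
      gcongr
      have : t k ^ p = t k * t k ^ (p - 1) := by
        conv_lhs => rw [show p = 1 + (p - 1) by ring]
        rw [Real.rpow_add' (ht0 k) (by linarith), Real.rpow_one]
      change t k ^ p ≤ _
      rw [this]
      exact mul_le_mul_of_nonneg_left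
        (Real.rpow_le_rpow (ht0 k) (htk k) (by linarith)) (ht0 k)
    refine (mul_le_mul_of_nonneg_left e1 (by positivity)).trans (le_of_eq ?_)
    have e2 : ((k : ℝ) + 1) ^ (-(p + 1)) * ((k : ℝ) + 1) ^ (p - 1) = (((k : ℝ) + 1) ^ 2)⁻¹ := by
      rw [← Real.rpow_add hk, show -(p + 1) + (p - 1) = -((2 : ℕ) : ℝ) by push_cast; ring,
        Real.rpow_neg hk.le, Real.rpow_natCast]
    rw [div_eq_mul_inv, ← e2]
    ring
  have htsum : ∑ k ∈ Finset.range K, t k / ((k : ℝ) + 1) ^ 2 ≤ 17 * B := by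
    have hpt : ∀ k ∈ Finset.range K, t k / ((k : ℝ) + 1) ^ 2 ≤
        4 * (m k / (2 * ((k : ℝ) + 1) * ((k : ℝ) + 2)))
        + 12 * (m (k + 1) / (2 * (((k + 1 : ℕ) : ℝ) + 1) * (((k + 1 : ℕ) : ℝ) + 2)))
        + (w k + 4 * w (k + 1)) := by
      intro k _
      have hk : (0 : ℝ) ≤ k := Nat.cast_nonneg k
      have a1 : m k / ((k : ℝ) + 1) ^ 2 ≤ 4 * (m k / (2 * ((k : ℝ) + 1) * ((k : ℝ) + 2))) := by
        rw [mul_div_assoc', div_le_div_iff₀ (by positivity) (by positivity)]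
        have : (2 * ((k : ℝ) + 1) * ((k : ℝ) + 2)) ≤ 4 * ((k : ℝ) + 1) ^ 2 := by nlinarith
        nlinarith [hm k]
      have a2 : m (k + 1) / ((k : ℝ) + 1) ^ 2
          ≤ 12 * (m (k + 1) / (2 * (((k + 1 : ℕ) : ℝ) + 1) * (((k + 1 : ℕ) : ℝ) + 2))) := by
        push_cast
        rw [mul_div_assoc', div_le_div_iff₀ (by positivity) (by positivity)]
        have : (2 * ((k : ℝ) + 1 + 1) * ((k : ℝ) + 1 + 2)) ≤ 12 * ((k : ℝ) + 1) ^ 2 := by nlinarith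
        nlinarith [hm (k + 1)]
      have a3 : (w k + 4 * w (k + 1)) / ((k : ℝ) + 1) ^ 2 ≤ w k + 4 * w (k + 1) :=
        div_le_self (by linarith [hw k, hw (k + 1)]) (by nlinarith)
      have : t k / ((k : ℝ) + 1) ^ 2 = m k / ((k : ℝ) + 1) ^ 2 + m (k + 1) / ((k : ℝ) + 1) ^ 2
          + (w k + 4 * w (k + 1)) / ((k : ℝ) + 1) ^ 2 := by
        simp only [ht]; ring
      linarith
    refine (Finset.sum_le_sum hpt).trans ?_
    rw [Finset.sum_add_distrib, Finset.sum_add_distrib, ← Finset.mul_sum, ← Finset.mul_sum]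
    have h1 := hS (K + 1)
    rw [Finset.sum_range_succ'] at h1
    have := hterm 0
    have := hS K
    have := hsum' K
    push_cast at *
    linarith
  refine (Finset.sum_le_sum fun k _ => hbound k).trans ?_
  rw [← Finset.mul_sum]
  refine (mul_le_mul_of_nonneg_left htsum (by positivity)).trans ?_
  have e3 : (4 * B) ^ p = (4 * B) ^ (p - 1) * (4 * B) := by
    conv_lhs => rw [show p = (p - 1) + 1 by ring]
    rw [Real.rpow_add' (by positivity) (by linarith), Real.rpow_one]
  have e4 : 17 * (C₁ * (4 * (C₂ + 10 * C₀))) ^ p * W ^ p = 17 * C₁ ^ p * (4 * B) ^ p := by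
    rw [mul_assoc 17, ← Real.mul_rpow (by positivity) hW, mul_assoc 17 (C₁ ^ p),
      ← Real.mul_rpow hC₁.le (by positivity), hB]
    ring_nf
  rw [e4, e3]
  have : 0 ≤ C₁ ^ p * (4 * B) ^ (p - 1) * B := by positivity
  nlinarith

/-- The increment of `u` along the dilation `y ↦ y / 2` is controlled by the gradient. -/
lemma sq_sub_half_le {n : ℕ} {u : Euc n → ℝ} (hu : ContDiff ℝ 1 u) {y : Euc n} (hy : ‖y‖ < 1) :
    (u ((1/2 : ℝ) • y) - u y) ^ 2 ≤ ∫ s in (1/2 : ℝ)..1, ‖fderiv ℝ u (s • y)‖ ^ 2 := by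
  have hc : Continuous fun s : ℝ => fderiv ℝ u (s • y) :=
    (hu.continuous_fderiv one_ne_zero).comp (by fun_prop)
  have hcn : Continuous fun s : ℝ => ‖fderiv ℝ u (s • y)‖ := hc.norm
  have hcy : Continuous fun s : ℝ => fderiv ℝ u (s • y) y := by fun_prop
  have hder : ∀ s : ℝ, HasDerivAt (fun s : ℝ => u (s • y)) (fderiv ℝ u (s • y) y) s := by
    intro s
    have h1 : HasDerivAt (fun s : ℝ => s • y) y s := by
      simpa using (hasDerivAt_id s).smul_const y
    exact (hu.differentiable one_ne_zero _).hasFDerivAt.comp_hasDerivAt s h1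
  have hftc := intervalIntegral.integral_eq_sub_of_hasDerivAt (a := (1/2 : ℝ)) (b := 1)
    (fun s _ => hder s) (hcy.intervalIntegrable _ _)
  rw [one_smul] at hftc
  set M := ∫ s in (1/2 : ℝ)..1, ‖fderiv ℝ u (s • y)‖ with hM
  have habs : |u y - u ((1/2 : ℝ) • y)| ≤ M := by
    rw [← hftc, ← Real.norm_eq_abs]
    refine intervalIntegral.norm_integral_le_of_norm_le (by norm_num) ?_
      (hcn.intervalIntegrable _ _)
    refine Eventually.of_forall fun s _ => ?_
    refine ((fderiv ℝ u (s • y)).le_opNorm y).trans ?_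
    exact mul_le_of_le_one_right (norm_nonneg _) hy.le
  -- Cauchy–Schwarz on an interval of length `1/2`, from `0 ≤ ∫ (f - 2M)²`
  have hcs : 0 ≤ ∫ s in (1/2 : ℝ)..1, (‖fderiv ℝ u (s • y)‖ - 2 * M) ^ 2 :=
    intervalIntegral.integral_nonneg (by norm_num) fun s _ => sq_nonneg _
  have hexp : ∫ s in (1/2 : ℝ)..1, (‖fderiv ℝ u (s • y)‖ - 2 * M) ^ 2
      = (∫ s in (1/2 : ℝ)..1, ‖fderiv ℝ u (s • y)‖ ^ 2) - 4 * M * M + 2 * M ^ 2 := by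
    have : ∀ s : ℝ, (‖fderiv ℝ u (s • y)‖ - 2 * M) ^ 2
        = ‖fderiv ℝ u (s • y)‖ ^ 2 - 4 * M * ‖fderiv ℝ u (s • y)‖ + 4 * M ^ 2 := fun s => by ring
    simp_rw [this]
    rw [intervalIntegral.integral_add, intervalIntegral.integral_sub,
      intervalIntegral.integral_const_mul, intervalIntegral.integral_const, ← hM]
    · simp only [smul_eq_mul]; ring
    all_goals exact Continuous.intervalIntegrable (by fun_prop) _ _
  have h1 := sq_le_sq' (neg_le_of_abs_le habs) (le_of_abs_le habs)
  have h2 : 0 ≤ ∫ s in (1/2 : ℝ)..1, ‖fderiv ℝ u (s • y)‖ ^ 2 :=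
    intervalIntegral.integral_nonneg (by norm_num) fun s _ => sq_nonneg _
  nlinarith

lemma lintegral_sq_sub_half_le {n : ℕ} {u : Euc n → ℝ} (hu : ContDiff ℝ 1 u) :
    ∫⁻ y in annulus n (1/2) 1, ENNReal.ofReal ((u ((1/2 : ℝ) • y) - u y) ^ 2)
      ≤ ENNReal.ofReal (2 ^ n) *
        ∫⁻ y in annulus n (1/4) 1, ENNReal.ofReal (‖fderiv ℝ u y‖ ^ 2) := by
  have hc : Continuous fun y => ‖fderiv ℝ u y‖ ^ 2 :=
    (hu.continuous_fderiv one_ne_zero).norm.pow 2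
  have hcm : Measurable fun y => ENNReal.ofReal (‖fderiv ℝ u y‖ ^ 2) :=
    hc.measurable.ennreal_ofReal
  have h2m : Measurable (fun z : Euc n × ℝ => ENNReal.ofReal (‖fderiv ℝ u (z.2 • z.1)‖ ^ 2)) :=
    hcm.comp (by fun_prop : Continuous fun z : Euc n × ℝ => z.2 • z.1).measurable
  have hpt : ∀ y ∈ annulus n (1/2) 1, ENNReal.ofReal ((u ((1/2 : ℝ) • y) - u y) ^ 2)
      ≤ ∫⁻ s in Ioc (1/2 : ℝ) 1, ENNReal.ofReal (‖fderiv ℝ u (s • y)‖ ^ 2) := by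
    intro y hy
    refine (ENNReal.ofReal_le_ofReal (sq_sub_half_le hu hy.2)).trans ?_
    rw [intervalIntegral.integral_of_le (by norm_num), ofReal_integral_eq_lintegral_ofReal]
    · have : Continuous fun s : ℝ => ‖fderiv ℝ u (s • y)‖ ^ 2 := hc.comp (by fun_prop)
      exact (this.integrableOn_Icc (a := 1/2) (b := 1)).mono_set Ioc_subset_Icc_self
    · exact Eventually.of_forall fun s => sq_nonneg _
  refine (setLIntegral_mono (Measurable.lintegral_prod_right' h2m) hpt).trans ?_
  rw [lintegral_lintegral_swap h2m.aemeasurable]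
  have hs : ∀ s ∈ Ioc (1/2 : ℝ) 1,
      ∫⁻ y in annulus n (1/2) 1, ENNReal.ofReal (‖fderiv ℝ u (s • y)‖ ^ 2)
      ≤ ENNReal.ofReal (2 ^ n) *
        ∫⁻ y in annulus n (1/4) 1, ENNReal.ofReal (‖fderiv ℝ u y‖ ^ 2) := by
    rintro s ⟨hs1, hs2⟩
    have hs0 : 0 < s := by linarith
    have hsub : annulus n (1/2) 1 ⊆ (fun x => s • x) ⁻¹' annulus n (1/4) 1 := by
      rintro y ⟨h1, h2⟩
      simp only [annulus, mem_preimage, mem_ofPred_eq, norm_smul, Real.norm_eq_abs,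
        abs_of_pos hs0]
      constructor <;> nlinarith
    refine (lintegral_mono_set hsub).trans ?_
    rw [setLIntegral_comp_smul hs0 hcm (measurableSet_annulus _ _ _)]
    gcongr
    rw [inv_le_comm₀ hs0 (by norm_num)]
    linarith
  refine (setLIntegral_mono measurable_const hs).trans ?_
  rw [setLIntegral_const, Real.volume_Ioc]
  refine mul_le_of_le_one_right (zero_le) ?_
  rw [ENNReal.ofReal_le_one]
  norm_num

/-! ### Shell estimates -/

/-- The restriction of `v` to the ball of radius `R / 2 ^ k`, rescaled to the unit ball. -/
def rescaled {n : ℕ} (v : Euc n → ℝ) (R : ℝ) (k : ℕ) (y : Euc n) : ℝ :=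
  v ((R * (1/2) ^ k) • y)

/-- `L²` mass on the unit shell. -/
def shellMass {n : ℕ} (u : Euc n → ℝ) : ℝ≥0∞ :=
  ∫⁻ y in annulus n (1/2) 1, ENNReal.ofReal (u y ^ 2)

/-- Dirichlet energy on the unit shell. -/
def shellDirichlet {n : ℕ} (u : Euc n → ℝ) : ℝ≥0∞ :=
  ∫⁻ y in annulus n (1/2) 1, ENNReal.ofReal (‖fderiv ℝ u y‖ ^ 2)

lemma contDiff_rescaled {n : ℕ} {v : Euc n → ℝ} (hv : ContDiff ℝ 1 v) (R : ℝ) (k : ℕ) :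
    ContDiff ℝ 1 (rescaled v R k) :=
  hv.comp (contDiff_const_smul _)

lemma norm_fderiv_comp_smul_sq {n : ℕ} (v : Euc n → ℝ) (r : ℝ) (y : Euc n) :
    ‖fderiv ℝ (fun y => v (r • y)) y‖ ^ 2 = r ^ 2 * ‖fderiv ℝ v (r • y)‖ ^ 2 := by
  rw [fderiv_comp_smul, norm_smul, mul_pow, Real.norm_eq_abs, sq_abs]

lemma rescaled_succ {n : ℕ} (v : Euc n → ℝ) (R : ℝ) (k : ℕ) :
    rescaled v R (k + 1) = fun y => rescaled v R k ((1/2 : ℝ) • y) := by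
  funext y
  simp only [rescaled, smul_smul, pow_succ, mul_assoc]

lemma shellMass_lt_top {n : ℕ} {u : Euc n → ℝ} (hu : ContDiff ℝ 1 u) : shellMass u < ∞ := by
  have hc : Continuous fun y => u y ^ 2 := hu.continuous.pow 2
  have hsub : annulus n (1/2) 1 ⊆ closedBall 0 1 := fun y hy => by
    simpa using hy.2.le
  have := ((hc.continuousOn.integrableOn_compact (μ := volume)
    (isCompact_closedBall (0 : Euc n) 1)).mono_set hsub).lintegral_lt_top
  exact this

/-- The inner half of the shell `1/4 ≤ |y| < 1` is the image of the outer one under `y ↦ y / 2`. -/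
lemma lintegral_annulus_quarter_le {n : ℕ} {f : Euc n → ℝ≥0∞} (hf : Measurable f) :
    ∫⁻ y in annulus n (1/4) 1, f y
      ≤ (∫⁻ y in annulus n (1/2) 1, f y) + ∫⁻ y in annulus n (1/2) 1, f ((1/2 : ℝ) • y) := by
  have hsub : annulus n (1/4) 1 ⊆ annulus n (1/2) 1 ∪ annulus n (1/4) (1/2) := by
    rintro y ⟨h1, h2⟩
    rcases le_or_gt (1/2) ‖y‖ with h | h
    · exact Or.inl ⟨h, h2⟩
    · exact Or.inr ⟨h1, h⟩
  refine (lintegral_mono_set hsub).trans ((lintegral_union_le _ _ _).trans ?_)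
  refine add_le_add le_rfl ?_
  have h := preimage_smul_annulus (n := n) (r := 1/2) (by norm_num) (1/2) 1
  have h2 := setLIntegral_comp_smul (r := (1/2 : ℝ)) (by norm_num) hf
    (measurableSet_annulus n (1/2 * (1/2)) (1/2 * 1))
  rw [h] at h2
  rw [h2, show (1/2 * (1/2) : ℝ) = 1/4 by norm_num, mul_one]
  refine le_mul_of_one_le_left zero_le ?_
  rw [ENNReal.one_le_ofReal]
  exact one_le_pow₀ (by norm_num)

lemma lintegral_dirichlet_quarter_le {n : ℕ} {u : Euc n → ℝ} (hu : ContDiff ℝ 1 u) :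
    ∫⁻ y in annulus n (1/4) 1, ENNReal.ofReal (‖fderiv ℝ u y‖ ^ 2)
      ≤ shellDirichlet u + 4 * shellDirichlet (fun y => u ((1/2 : ℝ) • y)) := by
  have hc : Continuous fun y => ‖fderiv ℝ u y‖ ^ 2 :=
    (hu.continuous_fderiv one_ne_zero).norm.pow 2
  have hcm : Measurable fun y => ENNReal.ofReal (‖fderiv ℝ u y‖ ^ 2) :=
    hc.measurable.ennreal_ofReal
  refine (lintegral_annulus_quarter_le hcm).trans (le_of_eq ?_)
  congr 1
  rw [shellDirichlet, ← lintegral_const_mul' _ _ (by norm_num)]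
  refine lintegral_congr fun y => ?_
  rw [norm_fderiv_comp_smul_sq, show (4 : ℝ≥0∞) = ENNReal.ofReal 4 by norm_num,
    ← ENNReal.ofReal_mul (by norm_num)]
  congr 1
  ring

lemma lintegral_energy_quarter_le {n : ℕ} {u : Euc n → ℝ} (hu : ContDiff ℝ 1 u) :
    ∫⁻ y in annulus n (1/4) 1, ENNReal.ofReal (energy u y)
      ≤ shellMass u + shellMass (fun y => u ((1/2 : ℝ) • y)) + shellDirichlet u
        + 4 * shellDirichlet (fun y => u ((1/2 : ℝ) • y)) := by
  have hc : Continuous fun y => u y ^ 2 := hu.continuous.pow 2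
  have hcm : Measurable fun y => ENNReal.ofReal (u y ^ 2) := hc.measurable.ennreal_ofReal
  have : ∀ y, ENNReal.ofReal (energy u y)
      = ENNReal.ofReal (‖fderiv ℝ u y‖ ^ 2) + ENNReal.ofReal (u y ^ 2) := fun y =>
    ENNReal.ofReal_add (by positivity) (by positivity)
  simp_rw [this]
  rw [lintegral_add_right _ hcm]
  refine (add_le_add (lintegral_dirichlet_quarter_le hu) (lintegral_annulus_quarter_le hcm)).trans
    (le_of_eq ?_)
  simp only [shellMass]
  ring

/-- Growth of the mass from one shell to the next; `ε` is the parameter of Young's inequality. -/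
lemma shellMass_half_le {n : ℕ} {u : Euc n → ℝ} (hu : ContDiff ℝ 1 u) {ε : ℝ} (hε : 0 < ε) :
    shellMass (fun y => u ((1/2 : ℝ) • y)) ≤ ENNReal.ofReal (1 + ε) * shellMass u
      + ENNReal.ofReal (1 + 1 / ε) * (ENNReal.ofReal (2 ^ n) *
        (shellDirichlet u + 4 * shellDirichlet (fun y => u ((1/2 : ℝ) • y)))) := by
  have hc : Continuous fun y => u y ^ 2 := hu.continuous.pow 2
  have hcm : Measurable fun y => ENNReal.ofReal (u y ^ 2) := hc.measurable.ennreal_ofReal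
  have hpt : ∀ y, ENNReal.ofReal (u ((1/2 : ℝ) • y) ^ 2) ≤
      ENNReal.ofReal (1 + ε) * ENNReal.ofReal (u y ^ 2)
      + ENNReal.ofReal (1 + 1 / ε) * ENNReal.ofReal ((u ((1/2 : ℝ) • y) - u y) ^ 2) := by
    intro y
    rw [← ENNReal.ofReal_mul (by positivity), ← ENNReal.ofReal_mul (by positivity),
      ← ENNReal.ofReal_add (by positivity) (by positivity)]
    apply ENNReal.ofReal_le_ofReal
    set a := u y
    set b := u ((1/2 : ℝ) • y)
    have key : (1 + ε) * a ^ 2 + (1 + 1 / ε) * (b - a) ^ 2 - b ^ 2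
        = (ε * a - (b - a)) ^ 2 / ε := by
      field_simp
      ring
    have : 0 ≤ (ε * a - (b - a)) ^ 2 / ε := by positivity
    linarith
  refine (lintegral_mono hpt).trans ?_
  rw [lintegral_add_left (hcm.const_mul _), lintegral_const_mul _ hcm,
    lintegral_const_mul' _ _ ENNReal.ofReal_ne_top]
  refine add_le_add le_rfl (mul_le_mul_right ?_ _)
  exact (lintegral_sq_sub_half_le hu).trans (mul_le_mul_right (lintegral_dirichlet_quarter_le hu) _)

/-- The weighted energy of `v` on the shell `R / 2 ^ (k + 1) ≤ |x| < R / 2 ^ k`. -/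
def shellEnergy {n : ℕ} (v : Euc n → ℝ) (R : ℝ) (k : ℕ) : ℝ≥0∞ :=
  ∫⁻ x in annulus n (R * (1/2) ^ k * (1/2)) (R * (1/2) ^ k),
    ENNReal.ofReal (‖x‖ ^ ((2 : ℝ) - n) * energy v x)

/-- Rescaling an integral over the `k`-th shell to the unit shell. -/
lemma lintegral_rescale {n : ℕ} {r : ℝ} (hr : 0 < r) {f : Euc n → ℝ≥0∞} (hf : Measurable f) :
    ∫⁻ y in annulus n (1/2) 1, f (r • y)
      = ENNReal.ofReal (r⁻¹ ^ n) * ∫⁻ x in annulus n (r * (1/2)) r, f x := by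
  have h2 := setLIntegral_comp_smul hr hf (measurableSet_annulus n (r * (1/2)) (r * 1))
  rw [preimage_smul_annulus hr, mul_one] at h2
  exact h2

lemma weight_le {n : ℕ} (hn : 3 ≤ n) {r : ℝ} (hr : 0 < r) {x : Euc n}
    (hx : x ∈ annulus n (r * (1/2)) r) : r⁻¹ ^ n * r ^ 2 ≤ ‖x‖ ^ ((2 : ℝ) - n) := by
  have hx0 : 0 < ‖x‖ := lt_of_lt_of_le (by positivity) hx.1
  have hn' : (3 : ℝ) ≤ n := by exact_mod_cast hn
  have : r⁻¹ ^ n * r ^ 2 = r ^ ((2 : ℝ) - n) := by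
    rw [Real.rpow_sub hr, Real.rpow_natCast, inv_pow]
    norm_cast
    rw [div_eq_mul_inv, mul_comm]
  rw [this]
  exact Real.rpow_le_rpow_of_nonpos hx0 hx.2.le (by linarith)

lemma measurable_weighted_energy {n : ℕ} {v : Euc n → ℝ} (hv : ContDiff ℝ 1 v) :
    Measurable fun x => ENNReal.ofReal (‖x‖ ^ ((2 : ℝ) - n) * energy v x) :=
  ((measurable_norm.pow_const _).mul (continuous_energy hv).measurable).ennreal_ofReal

lemma shellDirichlet_rescaled_le {n : ℕ} (hn : 3 ≤ n) {v : Euc n → ℝ} (hv : ContDiff ℝ 1 v)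
    {R : ℝ} (hR : 0 < R) (k : ℕ) : shellDirichlet (rescaled v R k) ≤ shellEnergy v R k := by
  have hr : 0 < R * (1/2) ^ k := by positivity
  set r := R * (1/2) ^ k with hrdef
  have hc : Continuous fun y => ‖fderiv ℝ v y‖ ^ 2 :=
    (hv.continuous_fderiv one_ne_zero).norm.pow 2
  have hm : Measurable fun x => ENNReal.ofReal (r ^ 2 * ‖fderiv ℝ v x‖ ^ 2) :=
    (hc.measurable.const_mul _).ennreal_ofReal
  have h1 : shellDirichlet (rescaled v R k)
      = ∫⁻ y in annulus n (1/2) 1, ENNReal.ofReal (r ^ 2 * ‖fderiv ℝ v (r • y)‖ ^ 2) := by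
    refine lintegral_congr fun y => ?_
    rw [← norm_fderiv_comp_smul_sq]
    rfl
  rw [h1, lintegral_rescale hr hm, ← lintegral_const_mul _ hm]
  refine setLIntegral_mono (measurable_weighted_energy hv) fun x hx => ?_
  rw [← ENNReal.ofReal_mul (by positivity), ← mul_assoc]
  refine ENNReal.ofReal_le_ofReal (mul_le_mul (weight_le hn hr hx) ?_ (by positivity)
    (by positivity))
  exact le_add_of_nonneg_right (sq_nonneg _)

lemma shellMass_rescaled_zero_le {n : ℕ} (hn : 3 ≤ n) {v : Euc n → ℝ} (hv : ContDiff ℝ 1 v)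
    {R : ℝ} (hR : 0 < R) :
    shellMass (rescaled v R 0) ≤ ENNReal.ofReal ((R ^ 2)⁻¹) * shellEnergy v R 0 := by
  have hc : Continuous fun y => v y ^ 2 := hv.continuous.pow 2
  have hm : Measurable fun x => ENNReal.ofReal (v x ^ 2) := hc.measurable.ennreal_ofReal
  have h1 : shellMass (rescaled v R 0)
      = ∫⁻ y in annulus n (1/2) 1, ENNReal.ofReal (v (R • y) ^ 2) := by
    refine lintegral_congr fun y => ?_
    simp [rescaled]
  rw [h1, lintegral_rescale hR hm, ← lintegral_const_mul _ hm, shellEnergy, pow_zero, mul_one,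
    ← lintegral_const_mul _ (measurable_weighted_energy hv)]
  refine setLIntegral_mono ((measurable_weighted_energy hv).const_mul _) fun x hx => ?_
  rw [← ENNReal.ofReal_mul (by positivity), ← ENNReal.ofReal_mul (by positivity), ← mul_assoc]
  refine ENNReal.ofReal_le_ofReal (mul_le_mul ?_ ?_ (by positivity) (by positivity))
  · have := mul_le_mul_of_nonneg_left (weight_le hn hR hx) (by positivity : 0 ≤ (R ^ 2)⁻¹)
    refine le_trans (le_of_eq ?_) this
    field_simp
  · exact le_add_of_nonneg_left (sq_nonneg _)

lemma sum_shellEnergy_le {n : ℕ} (v : Euc n → ℝ) {R : ℝ} (hR : 0 < R) (K : ℕ) :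
    ∑ k ∈ Finset.range K, shellEnergy v R k
      ≤ ∫⁻ x in ball 0 R, ENNReal.ofReal (‖x‖ ^ ((2 : ℝ) - n) * energy v x) := by
  simp only [shellEnergy]
  rw [← lintegral_biUnion_finset _ (fun k _ => measurableSet_annulus _ _ _)]
  · refine lintegral_mono_set ?_
    refine iUnion₂_subset fun k _ x hx => ?_
    rw [mem_ball_zero_iff]
    refine hx.2.trans_le (mul_le_of_le_one_right hR.le ?_)
    exact pow_le_one₀ (by norm_num) (by norm_num)
  · have aux : ∀ i j : ℕ, i < j → Disjoint (annulus n (R * (1/2) ^ i * (1/2)) (R * (1/2) ^ i))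
        (annulus n (R * (1/2) ^ j * (1/2)) (R * (1/2) ^ j)) := by
      intro i j hij
      refine Set.disjoint_left.2 fun x hi hj => ?_
      have h1 : R * (1/2 : ℝ) ^ j ≤ R * (1/2) ^ i * (1/2) := by
        rw [mul_assoc, ← pow_succ]
        exact mul_le_mul_of_nonneg_left
          (pow_le_pow_of_le_one (by norm_num) (by norm_num) hij) hR.le
      linarith [hi.1, hj.2]
    intro i _ j _ hij
    rcases lt_or_gt_of_ne hij with h | h
    · exact aux i j h
    · exact (aux j i h).symm

/-! ### Summation over the shells -/

lemma weightedLq_shell_le {n : ℕ} {v : Euc n → ℝ} (hv : ContDiff ℝ 1 v) {q : ℝ} (hq : 2 < q)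
    {R D : ℝ} (hR : 0 < R) (hRD : R ≤ D) (k : ℕ) :
    ∫⁻ x in annulus n (R * (1/2) ^ k * (1/2)) (R * (1/2) ^ k),
        ENNReal.ofReal (‖x‖ ^ (-(n : ℝ)) * ((1 - Real.log (‖x‖ / D))⁻¹) ^ (q / 2 + 1) * |v x| ^ q)
      ≤ ENNReal.ofReal (2 ^ n * 2 ^ (q / 2 + 1) * ((k : ℝ) + 1) ^ (-(q / 2 + 1))) *
        ∫⁻ y in annulus n (1/2) 1, ENNReal.ofReal (|rescaled v R k y| ^ q) := by
  have hr : 0 < R * (1/2) ^ k := by positivity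
  have hD : 0 < D := hR.trans_le hRD
  have hm : Measurable fun x => ENNReal.ofReal (|v x| ^ q) := by
    have : Continuous fun x => |v x| ^ q :=
      hv.continuous.abs.rpow_const fun x => Or.inr (by linarith)
    exact this.measurable.ennreal_ofReal
  have h1 : ∫⁻ y in annulus n (1/2) 1, ENNReal.ofReal (|rescaled v R k y| ^ q) =
      ENNReal.ofReal ((R * (1/2) ^ k)⁻¹ ^ n) *
        ∫⁻ x in annulus n (R * (1/2) ^ k * (1/2)) (R * (1/2) ^ k), ENNReal.ofReal (|v x| ^ q) :=
    lintegral_rescale hr hm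
  rw [h1, ← mul_assoc, ← ENNReal.ofReal_mul (by positivity), ← lintegral_const_mul _ hm]
  refine setLIntegral_mono (hm.const_mul _) fun x hx => ?_
  rw [← ENNReal.ofReal_mul (by positivity)]
  apply ENNReal.ofReal_le_ofReal
  have hx0 : 0 < ‖x‖ := lt_of_lt_of_le (by positivity) hx.1
  have hk : (0 : ℝ) ≤ k := Nat.cast_nonneg k
  -- the logarithm grows linearly in the index of the shell
  have hlog : ((k : ℝ) + 1) / 2 ≤ 1 - Real.log (‖x‖ / D) := by
    have h2 : ‖x‖ / D ≤ (1/2) ^ k := by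
      rw [div_le_iff₀ hD]
      have : (1/2 : ℝ) ^ k * R ≤ (1/2) ^ k * D := by gcongr
      linarith [hx.2]
    have h3 := Real.log_le_log (by positivity) h2
    rw [Real.log_pow, one_div, Real.log_inv] at h3
    have h4 := Real.log_two_gt_d9
    nlinarith
  have e1 : ((1 - Real.log (‖x‖ / D))⁻¹) ^ (q / 2 + 1)
      ≤ 2 ^ (q / 2 + 1) * ((k : ℝ) + 1) ^ (-(q / 2 + 1)) := by
    have h5 : (1 - Real.log (‖x‖ / D))⁻¹ ≤ 2 * ((k : ℝ) + 1)⁻¹ := by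
      have := inv_anti₀ (by positivity) hlog
      rwa [inv_div, div_eq_mul_inv] at this
    have h6 : 0 ≤ (1 - Real.log (‖x‖ / D))⁻¹ :=
      inv_nonneg.2 (le_trans (by positivity) hlog)
    refine (Real.rpow_le_rpow h6 h5 (by linarith)).trans (le_of_eq ?_)
    rw [Real.mul_rpow (by norm_num) (by positivity), Real.inv_rpow (by positivity),
      Real.rpow_neg (by positivity)]
  have e2 : ‖x‖ ^ (-(n : ℝ)) ≤ 2 ^ n * (R * (1/2) ^ k)⁻¹ ^ n := by
    rw [Real.rpow_neg hx0.le, Real.rpow_natCast, ← mul_pow, ← inv_pow]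
    gcongr
    have := inv_anti₀ (by positivity) hx.1
    refine this.trans (le_of_eq ?_)
    rw [mul_inv, mul_comm]
    norm_num
  have h6 : 0 ≤ ((1 - Real.log (‖x‖ / D))⁻¹) ^ (q / 2 + 1) :=
    Real.rpow_nonneg (inv_nonneg.2 (le_trans (by positivity) hlog)) _
  have e3 := mul_le_mul e2 e1 h6 (by positivity)
  refine (mul_le_mul_of_nonneg_right e3 (by positivity)).trans (le_of_eq ?_)
  ring

lemma exists_mem_shell {n : ℕ} {R : ℝ} {x : Euc n} (hx0 : x ≠ 0) (hx : ‖x‖ < R) :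
    ∃ k : ℕ, x ∈ annulus n (R * (1/2) ^ k * (1/2)) (R * (1/2) ^ k) := by
  have hpos : 0 < ‖x‖ := norm_pos_iff.2 hx0
  have hR : 0 < R := hpos.trans hx
  have hex : ∃ k : ℕ, R * (1/2) ^ (k + 1) ≤ ‖x‖ := by
    obtain ⟨k, hk⟩ := exists_pow_lt_of_lt_one (div_pos hpos hR) (by norm_num : (1/2 : ℝ) < 1)
    refine ⟨k, ?_⟩
    rw [lt_div_iff₀ hR] at hk
    have : (1/2 : ℝ) ^ (k + 1) ≤ (1/2) ^ k :=
      pow_le_pow_of_le_one (by norm_num) (by norm_num) (Nat.le_succ k)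
    nlinarith
  classical
  refine ⟨Nat.find hex, ?_, ?_⟩
  · have := Nat.find_spec hex
    rwa [pow_succ, ← mul_assoc] at this
  · rcases h : Nat.find hex with _ | j
    · simpa using hx
    · have := Nat.find_min hex (m := j) (by omega)
      exact not_le.1 this

/-- The inequality for `C¹` functions on a ball centred at the singular point, in the form of
extended integrals. -/
lemma weighted_sobolev_ball {n : ℕ} (hn : 3 ≤ n) {q : ℝ} (hq : 2 < q)
    (hqn : q ≤ 2 * (n : ℝ) / ((n : ℝ) - 2)) {R : ℝ} (hR : 0 < R) :
    ∃ C : ℝ, 0 < C ∧ ∀ D, R ≤ D → ∀ v : Euc n → ℝ, ContDiff ℝ 1 v → ∀ W : ℝ, 0 ≤ W →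
      ∫⁻ x in ball 0 R, ENNReal.ofReal (‖x‖ ^ ((2 : ℝ) - n) * energy v x) ≤ ENNReal.ofReal W →
      ∫⁻ x in ball 0 R \ {0}, ENNReal.ofReal
        (‖x‖ ^ (-(n : ℝ)) * ((1 - Real.log (‖x‖ / D))⁻¹) ^ (q / 2 + 1) * |v x| ^ q)
      ≤ ENNReal.ofReal (C * W ^ (q / 2)) := by
  obtain ⟨C₁, hC₁, hsob⟩ := sobolev_annulus n hn hq hqn
  refine ⟨2 ^ n * 2 ^ (q / 2 + 1) *
    (17 * (C₁ * (4 * ((R ^ 2)⁻¹ + 10 * 2 ^ n))) ^ (q / 2)), by positivity, ?_⟩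
  intro D hRD v hv W hW hE
  set m : ℕ → ℝ := fun k => (shellMass (rescaled v R k)).toReal with hm
  set w : ℕ → ℝ := fun k => (shellEnergy v R k).toReal with hw
  set J : ℕ → ℝ≥0∞ := fun k =>
    ∫⁻ y in annulus n (1/2) 1, ENNReal.ofReal (|rescaled v R k y| ^ q) with hJ
  have hC1 := fun k => contDiff_rescaled hv R k
  have hM : ∀ k, shellMass (rescaled v R k) = ENNReal.ofReal (m k) := fun k =>
    (ENNReal.ofReal_toReal (shellMass_lt_top (hC1 k)).ne).symm
  have hsumE : ∀ K, ∑ k ∈ Finset.range K, shellEnergy v R k ≤ ENNReal.ofReal W := fun K =>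
    (sum_shellEnergy_le v hR K).trans hE
  have hwfin : ∀ k, shellEnergy v R k ≠ ∞ := fun k => by
    refine ne_top_of_le_ne_top (ENNReal.ofReal_ne_top (r := W)) (le_trans ?_ (hsumE (k + 1)))
    exact Finset.single_le_sum (fun _ _ => zero_le) (Finset.self_mem_range_succ k)
  have hWk : ∀ k, shellEnergy v R k = ENNReal.ofReal (w k) := fun k =>
    (ENNReal.ofReal_toReal (hwfin k)).symm
  have hm0 : ∀ k, 0 ≤ m k := fun k => ENNReal.toReal_nonneg
  have hw0 : ∀ k, 0 ≤ w k := fun k => ENNReal.toReal_nonneg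
  have hsum : ∀ K, ∑ k ∈ Finset.range K, w k ≤ W := by
    intro K
    have h := hsumE K
    simp_rw [hWk] at h
    rw [← ENNReal.ofReal_sum_of_nonneg fun k _ => hw0 k] at h
    exact (ENNReal.ofReal_le_ofReal_iff hW).1 h
  have hdir : ∀ k, shellDirichlet (rescaled v R k)
      + 4 * shellDirichlet (fun y => rescaled v R k ((1/2 : ℝ) • y))
      ≤ ENNReal.ofReal (w k + 4 * w (k + 1)) := by
    intro k
    rw [← rescaled_succ, ENNReal.ofReal_add (hw0 k) (by linarith [hw0 (k + 1)]),
      ENNReal.ofReal_mul (by norm_num), ← hWk, ← hWk, ENNReal.ofReal_ofNat]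
    exact add_le_add (shellDirichlet_rescaled_le hn hv hR k)
      (mul_le_mul_right (shellDirichlet_rescaled_le hn hv hR (k + 1)) _)
  have hstep : ∀ k : ℕ, m (k + 1) ≤ (1 + 1 / (2 * ((k : ℝ) + 1))) * m k
      + (1 + 2 * ((k : ℝ) + 1)) * (2 ^ n * (w k + 4 * w (k + 1))) := by
    intro k
    have h1 : 0 ≤ m k := hm0 k
    have h2 : 0 ≤ w k + 4 * w (k + 1) := by linarith [hw0 k, hw0 (k + 1)]
    have h := shellMass_half_le (hC1 k) (ε := 1 / (2 * ((k : ℝ) + 1))) (by positivity)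
    have h' := h.trans (add_le_add le_rfl (mul_le_mul_right (mul_le_mul_right (hdir k) _) _))
    rw [← rescaled_succ, hM, hM, ← ENNReal.ofReal_mul (by positivity),
      ← ENNReal.ofReal_mul (by positivity), ← ENNReal.ofReal_mul (by positivity),
      ← ENNReal.ofReal_add (by positivity) (by positivity), one_div_one_div] at h'
    exact (ENNReal.ofReal_le_ofReal_iff (by positivity)).1 h'
  have hJle : ∀ k, J k ≤
      ENNReal.ofReal ((C₁ * (m k + m (k + 1) + w k + 4 * w (k + 1))) ^ (q / 2)) := by
    intro k
    have h1 := hm0 k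
    have h2 := hm0 (k + 1)
    have h3 : 0 ≤ w k + 4 * w (k + 1) := by linarith [hw0 k, hw0 (k + 1)]
    refine (hsob _ (hC1 k)).trans ?_
    have e : m k + m (k + 1) + w k + 4 * w (k + 1)
        = (m k + m (k + 1)) + (w k + 4 * w (k + 1)) := by ring
    rw [e, ← ENNReal.ofReal_rpow_of_nonneg (by positivity) (by linarith),
      ENNReal.ofReal_mul hC₁.le, ENNReal.ofReal_add (by positivity) h3,
      ENNReal.ofReal_add h1 h2, ← hM, ← hM]
    refine ENNReal.rpow_le_rpow (mul_le_mul_right ?_ _) (by linarith)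
    refine (lintegral_energy_quarter_le (hC1 k)).trans ?_
    rw [rescaled_succ, add_assoc]
    exact add_le_add le_rfl (hdir k)
  have hJof : ∀ k, J k = ENNReal.ofReal (J k).toReal := fun k =>
    (ENNReal.ofReal_toReal (ne_top_of_le_ne_top ENNReal.ofReal_ne_top (hJle k))).symm
  have hI : ∀ k, (J k).toReal ≤ (C₁ * (m k + m (k + 1) + w k + 4 * w (k + 1))) ^ (q / 2) := by
    intro k
    refine ENNReal.toReal_le_of_le_ofReal ?_ (hJle k)
    have := hm0 k; have := hm0 (k + 1); have := hw0 k; have := hw0 (k + 1)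
    positivity
  have hm00 : m 0 ≤ (R ^ 2)⁻¹ * W := by
    have h := shellMass_rescaled_zero_le hn hv hR
    have h1 := hsumE 1
    rw [Finset.sum_range_one] at h1
    have h2 := h.trans (mul_le_mul_right h1 _)
    rw [hM, ← ENNReal.ofReal_mul (by positivity)] at h2
    exact (ENNReal.ofReal_le_ofReal_iff (by positivity)).1 h2
  have hfinal := discrete_bliss (p := q / 2) (C₀ := 2 ^ n) (by linarith)
    (one_le_pow₀ (by norm_num)) hC₁ (by positivity : 0 ≤ (R ^ 2)⁻¹) hW hm0 hw0 hstep hI hm00 hsum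
  have hcover : (ball 0 R \ {0} : Set (Euc n)) ⊆
      ⋃ k : ℕ, annulus n (R * (1/2) ^ k * (1/2)) (R * (1/2) ^ k) := by
    rintro x ⟨h1, h2⟩
    exact mem_iUnion.2 (exists_mem_shell h2 (mem_ball_zero_iff.1 h1))
  refine (lintegral_mono_set hcover).trans ((lintegral_iUnion_le _ _).trans ?_)
  refine (ENNReal.tsum_le_tsum fun k => weightedLq_shell_le hv hq hR hRD k).trans ?_
  refine ENNReal.tsum_le_of_sum_range_le fun K => ?_
  have hterm : ∀ k ∈ Finset.range K,
      ENNReal.ofReal (2 ^ n * 2 ^ (q / 2 + 1) * ((k : ℝ) + 1) ^ (-(q / 2 + 1))) * J k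
      = ENNReal.ofReal (2 ^ n * 2 ^ (q / 2 + 1) *
        (((k : ℝ) + 1) ^ (-(q / 2 + 1)) * (J k).toReal)) := by
    intro k _
    rw [hJof k, ← ENNReal.ofReal_mul (by positivity), ENNReal.toReal_ofReal ENNReal.toReal_nonneg,
      mul_assoc]
  refine (Finset.sum_congr rfl hterm).trans_le ?_
  rw [← ENNReal.ofReal_sum_of_nonneg fun k _ => by positivity, ← Finset.mul_sum]
  apply ENNReal.ofReal_le_ofReal
  rw [mul_assoc (2 ^ n * 2 ^ (q / 2 + 1) : ℝ)]
  exact mul_le_mul_of_nonneg_left (hfinal K) (by positivity)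

/-! ### Passage to the domain -/

lemma sum_gradient_sq {n : ℕ} (v : Euc n → ℝ) (x : Euc n) :
    ∑ i, (gradient v x i) ^ 2 = ‖fderiv ℝ v x‖ ^ 2 := by
  rw [← EuclideanSpace.real_norm_sq_eq, gradient, LinearIsometryEquiv.norm_map]

lemma dist_lt_sSup {n : ℕ} {Ω : Set (Euc n)} (hΩo : IsOpen Ω) (hbd : Bornology.IsBounded Ω)
    {x₀ x : Euc n} (hx : x ∈ Ω) (hne : x ≠ x₀) :
    dist x x₀ < sSup ((fun y => dist y x₀) '' Ω) := by
  have hB : BddAbove ((fun y => dist y x₀) '' Ω) := by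
    obtain ⟨r, hr⟩ := hbd.subset_closedBall x₀
    exact ⟨r, by rintro _ ⟨y, hy, rfl⟩; exact hr hy⟩
  obtain ⟨ε, hε, hsub⟩ := Metric.isOpen_iff.1 hΩo x hx
  have hd : 0 < ‖x - x₀‖ := norm_pos_iff.2 (sub_ne_zero.2 hne)
  -- moving `x` away from `x₀` by `ε / 2` stays in `Ω`
  set t := ε / (2 * ‖x - x₀‖) with ht
  have ht0 : 0 < t := by positivity
  have hmem : x + t • (x - x₀) ∈ Ω := by
    apply hsub
    rw [mem_ball, dist_eq_norm, add_sub_cancel_left, norm_smul, Real.norm_eq_abs,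
      abs_of_pos ht0, ht]
    have : ε / (2 * ‖x - x₀‖) * ‖x - x₀‖ = ε / 2 := by field_simp
    rw [this]
    linarith
  have hle := le_csSup hB (mem_image_of_mem (fun y => dist y x₀) hmem)
  refine lt_of_lt_of_le ?_ hle
  have e : x + t • (x - x₀) - x₀ = (1 + t) • (x - x₀) := by
    rw [add_smul, one_smul]; abel
  simp only [dist_eq_norm]
  rw [e, norm_smul, Real.norm_eq_abs, abs_of_pos (by linarith)]
  nlinarith

lemma setLIntegral_translate {n : ℕ} (x₀ : Euc n) {f : Euc n → ℝ≥0∞} (hf : Measurable f)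
    {A : Set (Euc n)} (hA : MeasurableSet A) :
    ∫⁻ y in (fun y => x₀ + y) ⁻¹' A, f (x₀ + y) = ∫⁻ x in A, f x :=
  (measurePreserving_add_left volume x₀).setLIntegral_comp_preimage hA hf

/-- **Critical Hardy–Sobolev inequality with logarithmic correction near a boundary
point** (Lemma 2.3).  Let `Ω ⊂ ℝⁿ`, `n ≥ 3`, be a bounded domain, `Γ_n = {x₀} ⊂ ∂Ω`
with `B_{δ₀}(x₀) \ {x₀} ⊂ Ω` for some small `δ₀ > 0`.  Assume `α_n = -(n-2)/2`,
`2 < q ≤ 2n/(n-2)`, and `β_n = -(n-2)/2 - 1 + n(q-2)/(2q)`.  Then for every `δ > 0`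
there is `C = C(Ω, δ, n) > 0` such that for all `v ∈ C₀^∞(Ω)`:
`∫_{Γ_n^δ} d_n^{2-n}(|∇v|² + v²) ≥ C (∫_{Γ_n^δ} d_n^{β_n q} X(d_n/D_n)^{q/2+1} |v|^q)^{2/q}`,
where `d_n(x) = |x - x₀|`, `X(t) = (1 - ln t)⁻¹` and `D_n = sup_{x∈Ω} d_n(x)`. -/
theorem weighted_sobolev_log_near_boundary_point
    {n : ℕ} (hn : 3 ≤ n) (Ω : Set (Euc n))
    (hΩo : IsOpen Ω) (hne : Ω.Nonempty) (hconn : IsConnected Ω)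
    (hbd : Bornology.IsBounded Ω)
    (x₀ : Euc n) (hx₀ : x₀ ∈ frontier Ω)
    (δ₀ : ℝ) (hδ₀ : 0 < δ₀) (hpunct : Metric.ball x₀ δ₀ \ {x₀} ⊆ Ω)
    (αn q βn : ℝ) (hαn : αn = -((n : ℝ) - 2) / 2)
    (hq : 2 < q) (hqn : q ≤ 2 * (n : ℝ) / ((n : ℝ) - 2))
    (hβ : βn = -((n : ℝ) - 2) / 2 - 1 + (n : ℝ) * (q - 2) / (2 * q)) :
    ∀ δ : ℝ, 0 < δ → ∃ C : ℝ, 0 < C ∧ ∀ v, IsTest Ω v →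
      C * (∫ x in {x ∈ Ω | dist x x₀ < δ},
            dist x x₀ ^ (βn * q)
              * ((1 - Real.log (dist x x₀ /
                  sSup ((fun y => dist y x₀) '' Ω)))⁻¹) ^ (q / 2 + 1)
              * |v x| ^ q) ^ (2 / q)
        ≤ ∫ x in {x ∈ Ω | dist x x₀ < δ},
            dist x x₀ ^ ((2 : ℝ) - (n : ℝ))
              * ((∑ i, (gradient v x i) ^ 2) + (v x) ^ 2) := by
  intro δ hδ
  have hn' : (3 : ℝ) ≤ n := by exact_mod_cast hn
  have hx₀Ω : x₀ ∉ Ω := by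
    rw [hΩo.frontier_eq] at hx₀
    exact hx₀.2
  set D := sSup ((fun y => dist y x₀) '' Ω) with hD
  have hltD : ∀ x ∈ Ω, dist x x₀ < D := fun x hx =>
    dist_lt_sSup hΩo hbd hx fun h => hx₀Ω (h ▸ hx)
  have hDpos : 0 < D := by
    obtain ⟨x, hx⟩ := hne
    exact dist_nonneg.trans_lt (hltD x hx)
  set R := min δ D with hRdef
  have hR : 0 < R := lt_min hδ hDpos
  have hβq : βn * q = -(n : ℝ) := by
    rw [hβ]
    field_simp
    ring
  obtain ⟨C, hC, hcore⟩ := weighted_sobolev_ball hn hq hqn hR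
  refine ⟨(C ^ (2 / q))⁻¹, by positivity, ?_⟩
  rintro v ⟨hvsmooth, hvcs, hvΩ⟩
  have hv : ContDiff ℝ 1 v := hvsmooth.of_le (by exact_mod_cast le_top)
  simp_rw [sum_gradient_sq]
  rw [hβq]
  set A : Set (Euc n) := {x ∈ Ω | dist x x₀ < δ} with hA
  have hAeq : A = Ω ∩ ball x₀ δ := rfl
  have hAm : MeasurableSet A := by
    rw [hAeq]
    exact (hΩo.inter isOpen_ball).measurableSet
  have hAsub : A ⊆ ball x₀ R \ {x₀} := by
    intro x hx
    refine ⟨?_, fun h => hx₀Ω ((mem_singleton_iff.1 h) ▸ hx.1)⟩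
    exact lt_min hx.2 (hltD x hx.1)
  set h : Euc n → ℝ := fun x => dist x x₀ ^ ((2 : ℝ) - n) * energy v x with hh
  set g : Euc n → ℝ := fun x => dist x x₀ ^ (-(n : ℝ))
    * ((1 - Real.log (dist x x₀ / D))⁻¹) ^ (q / 2 + 1) * |v x| ^ q with hg
  change (C ^ (2 / q))⁻¹ * (∫ x in A, g x) ^ (2 / q) ≤ ∫ x in A, h x
  have hdm : Measurable fun x : Euc n => dist x x₀ := measurable_id.dist measurable_const
  have hhm : Measurable h := (hdm.pow_const _).mul (continuous_energy hv).measurable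
  have hgm : Measurable g := by
    refine ((hdm.pow_const _).mul ?_).mul ?_
    · exact ((measurable_const.sub ((hdm.div_const D).log)).inv).pow_const _
    · exact (hv.continuous.abs.measurable).pow_const _
  have hh0 : ∀ x, 0 ≤ h x := fun x =>
    mul_nonneg (Real.rpow_nonneg dist_nonneg _) (energy_nonneg v x)
  have hhsupp : ∀ x, x ∉ tsupport v → h x = 0 := by
    intro x hx
    have h1 : v x = 0 := image_eq_zero_of_notMem_tsupport hx
    have h2 : fderiv ℝ v x = 0 := by
      by_contra hne0
      exact hx (support_fderiv_subset ℝ hne0)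
    simp [hh, energy, h1, h2]
  -- the support of `v` stays away from `x₀`, so the singular weight is harmless
  have henergyInt : Integrable h := by
    refine IntegrableOn.integrable_of_forall_notMem_eq_zero (s := tsupport v) ?_ hhsupp
    refine ContinuousOn.integrableOn_compact hvcs ?_
    refine ContinuousOn.mul ?_ (continuous_energy hv).continuousOn
    refine ContinuousOn.rpow_const (by fun_prop) fun x hx => Or.inl ?_
    exact dist_ne_zero.2 fun he => hx₀Ω (he ▸ hvΩ hx)
  set W := ∫ x in A, h x with hW
  have hW0 : 0 ≤ W := setIntegral_nonneg hAm fun x _ => hh0 x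
  have hWl : ENNReal.ofReal W = ∫⁻ x in A, ENNReal.ofReal (h x) :=
    ofReal_integral_eq_lintegral_ofReal henergyInt.integrableOn (Eventually.of_forall hh0)
  have hball : ∫⁻ x in ball x₀ R, ENNReal.ofReal (h x) ≤ ENNReal.ofReal W := by
    rw [hWl, ← lintegral_indicator isOpen_ball.measurableSet, ← lintegral_indicator hAm]
    refine lintegral_mono fun x => ?_
    by_cases hx : x ∈ tsupport v
    · by_cases hxb : x ∈ ball x₀ R
      · have hxA : x ∈ A := ⟨hvΩ hx, lt_of_lt_of_le hxb (min_le_left _ _)⟩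
        rw [indicator_of_mem hxb, indicator_of_mem hxA]
      · rw [indicator_of_notMem hxb]
        exact zero_le
    · simp [indicator, hhsupp x hx]
  -- translate the singular point to the origin
  have hpre : (fun y => x₀ + y) ⁻¹' ball x₀ R = ball 0 R := by
    ext y; simp [dist_eq_norm]
  have hpre' : (fun y => x₀ + y) ⁻¹' (ball x₀ R \ {x₀}) = ball 0 R \ {0} := by
    ext y; simp [dist_eq_norm]
  have hv' : ContDiff ℝ 1 fun y => v (x₀ + y) := hv.comp (contDiff_const.add contDiff_id)
  have hball' : ∫⁻ y in ball 0 R, ENNReal.ofReal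
      (‖y‖ ^ ((2 : ℝ) - n) * energy (fun y => v (x₀ + y)) y) ≤ ENNReal.ofReal W := by
    rw [← setLIntegral_translate x₀ hhm.ennreal_ofReal isOpen_ball.measurableSet, hpre] at hball
    refine le_trans (le_of_eq (lintegral_congr fun y => ?_)) hball
    simp [hh, energy, dist_eq_norm, fderiv_comp_add_left]
  have hG := hcore D (min_le_right _ _) _ hv' W hW0 hball'
  have hG' : ∫⁻ x in A, ENNReal.ofReal (g x) ≤ ENNReal.ofReal (C * W ^ (q / 2)) := by
    refine (lintegral_mono_set hAsub).trans ?_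
    rw [← setLIntegral_translate x₀ hgm.ennreal_ofReal
      (isOpen_ball.measurableSet.diff (measurableSet_singleton _)), hpre']
    refine le_trans (le_of_eq (lintegral_congr fun y => ?_)) hG
    simp [hg, dist_eq_norm]
  have hg0 : ∀ x ∈ A, 0 ≤ g x := by
    intro x hx
    have h1 : Real.log (dist x x₀ / D) ≤ 0 := by
      refine Real.log_nonpos (by positivity) ?_
      rw [div_le_one hDpos]
      exact (hltD x hx.1).le
    have h2 : 0 ≤ (1 - Real.log (dist x x₀ / D))⁻¹ := inv_nonneg.2 (by linarith)
    simp only [hg]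
    positivity
  have hgle : ∫ x in A, g x ≤ C * W ^ (q / 2) := by
    rw [integral_eq_lintegral_of_nonneg_ae (ae_restrict_of_forall_mem hAm hg0)
      hgm.aestronglyMeasurable]
    exact ENNReal.toReal_le_of_le_ofReal (by positivity) hG'
  have hgnn : 0 ≤ ∫ x in A, g x := setIntegral_nonneg hAm hg0
  have hfin : (∫ x in A, g x) ^ (2 / q) ≤ C ^ (2 / q) * W := by
    refine (Real.rpow_le_rpow hgnn hgle (by positivity)).trans (le_of_eq ?_)
    rw [Real.mul_rpow hC.le (by positivity), ← Real.rpow_mul hW0,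
      show q / 2 * (2 / q) = 1 by field_simp, Real.rpow_one]
  rw [inv_mul_le_iff₀ (by positivity)]
  exact hfin
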